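/- Γ_n(t) = (Γ_{n+1}^{(0)} − Γ_{n−1}^{(0)})/(4t) + F + O(t), where F ∈ K is a polynomial in the parameters a_{n−N−1}, …, a_{n+N+1}, a_+, a_− (with coefficients involving only n, ε and u_1, …, u_N) in which both a_{n+N+1} and a_{n−N−1} actually occur and occur linearly, i.e., F has degree exactly 1 in a_{n−N−1} and degree exactly 1 in a_{n+N+1}, with nonzero coefficients. -/

import Mathlib

/-!
Common definitions: the matrices `L₁`, `L₂` of the Toeplitz lattice, their powers,
the recursion polynomials `Γ_k` (here `GamA`), `Γ̃_k` (here `GamB`) and their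
self-dual version (`GamSD`), together with the notion of formal Laurent
solutions of the (self-dual) Toeplitz lattice.
-/

noncomputable section

namespace SingConf

variable {A : Type*} [CommRing A]

/-- The entry `(L₁)_{ij} = -x_i y_{j-1} + δ_{i+1,j}` (for `j - i ≤ 1`, zero otherwise). -/
def L1e (x y : ℤ → A) (i j : ℤ) : A :=
  if j ≤ i + 1 then -(x i * y (j - 1)) + (if i + 1 = j then 1 else 0) else 0

/-- The entry `(L₂)_{ij} = -y_j x_{i-1} + δ_{j+1,i}` (for `j - i ≥ -1`, zero otherwise). -/
def L2e (x y : ℤ → A) (i j : ℤ) : A :=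
  if i ≤ j + 1 then -(y j * x (i - 1)) + (if j + 1 = i then 1 else 0) else 0

/-- The entry `(L₁^s)_{ij}`; the matrix `L₁` has upper bandwidth 1, so each entry of a
power is a finite sum. -/
def L1pow (x y : ℤ → A) : ℕ → ℤ → ℤ → A
  | 0 => fun i j => if i = j then 1 else 0
  | s + 1 => fun i j => ∑ l ∈ Finset.Icc (j - 1) (i + (s : ℤ)), L1pow x y s i l * L1e x y l j

/-- The entry `(L₂^s)_{ij}`. -/
def L2pow (x y : ℤ → A) : ℕ → ℤ → ℤ → A
  | 0 => fun i j => if i = j then 1 else 0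
  | s + 1 => fun i j => ∑ l ∈ Finset.Icc (i - (s : ℤ)) (j + 1), L2pow x y s i l * L2e x y l j

/-- The recursion polynomial
`Γ_k(x,y;u) = (v_k/y_k)(-(L₁P₁'(L₁))_{k+1,k+1} - (L₂P₂'(L₂))_{k,k}
              + (P₁'(L₁))_{k+1,k} + (P₂'(L₂))_{k,k+1}) + k x_k`
where `P₁(λ) = ∑_{i=1}^N u_i λ^i/i`, `P₂(λ) = ∑_{i=1}^N u_{-i} λ^i/i`, `v_k = 1 - x_k y_k`.
The apparent denominator `y_k` cancels, thanks to the identities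
`(L₁^{i-1})_{k+1,k} - (L₁^i)_{k+1,k+1} = y_k ∑_{l} x_l (L₁^{i-1})_{k+1,l}` and
`(L₂^{i-1})_{k,k+1} - (L₂^i)_{k,k} = y_k ∑_{l} x_{l-1} (L₂^{i-1})_{k,l}`,
which is how the cancellation-free expression below is obtained. -/
def GamA (N : ℕ) (u : ℤ → A) (x y : ℤ → A) (k : ℤ) : A :=
  (1 - x k * y k) *
    ((∑ i ∈ Finset.Icc 1 N, u (i : ℤ) *
        ∑ l ∈ Finset.Icc k (k + (i : ℤ)), x l * L1pow x y (i - 1) (k + 1) l) +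
      ∑ i ∈ Finset.Icc 1 N, u (-(i : ℤ)) *
        ∑ l ∈ Finset.Icc (k - (i : ℤ) + 1) (k + 1), x (l - 1) * L2pow x y (i - 1) k l) +
  (k : A) * x k

/-- The recursion polynomial
`Γ̃_k(x,y;u) = (v_k/x_k)(-(L₁P₁'(L₁))_{k,k} - (L₂P₂'(L₂))_{k+1,k+1}
              + (P₁'(L₁))_{k+1,k} + (P₂'(L₂))_{k,k+1}) + k y_k`,
written in cancellation-free form using
`(L₁^{i-1})_{k+1,k} - (L₁^i)_{k,k} = x_k ∑_{l} y_{l-1} (L₁^{i-1})_{l,k}` and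
`(L₂^{i-1})_{k,k+1} - (L₂^i)_{k+1,k+1} = x_k ∑_{l} y_l (L₂^{i-1})_{l,k+1}`. -/
def GamB (N : ℕ) (u : ℤ → A) (x y : ℤ → A) (k : ℤ) : A :=
  (1 - x k * y k) *
    ((∑ i ∈ Finset.Icc 1 N, u (i : ℤ) *
        ∑ l ∈ Finset.Icc (k - (i : ℤ) + 1) (k + 1), y (l - 1) * L1pow x y (i - 1) l k) +
      ∑ i ∈ Finset.Icc 1 N, u (-(i : ℤ)) *
        ∑ l ∈ Finset.Icc k (k + (i : ℤ)), y l * L2pow x y (i - 1) l (k + 1)) +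
  (k : A) * y k

/-- The self-dual recursion polynomial
`Γ_k(x;u) = (v_k/x_k)(2(P'(L))_{k+1,k} - (LP'(L))_{k+1,k+1} - (LP'(L))_{k,k}) + k x_k`
(where `L = L₁` with `y = x`, `v_k = 1 - x_k²`), in cancellation-free form. -/
def GamSD (N : ℕ) (u : ℕ → A) (x : ℤ → A) (k : ℤ) : A :=
  (1 - x k * x k) *
    (∑ i ∈ Finset.Icc 1 N, u i *
      ((∑ l ∈ Finset.Icc k (k + (i : ℤ)), x l * L1pow x x (i - 1) (k + 1) l) +
        ∑ l ∈ Finset.Icc (k - (i : ℤ) + 1) (k + 1), x (l - 1) * L1pow x x (i - 1) l k)) +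
  (k : A) * x k

variable {K : Type*} [Field K]

/-- `f(t) = O(t^m)` for a formal Laurent series. -/
def BigO (f : LaurentSeries K) (m : ℤ) : Prop := ∀ i < m, f.coeff i = 0

/-- A family `x(t) = (x_k(t))_{k ∈ ℤ}` of formal Laurent series is a solution of the first
vector field of the self-dual Toeplitz lattice: `dx_k/dt = (1 - x_k²)(x_{k+1} - x_{k-1})`;
stated coefficientwise (the coefficient of `t^m` in `dx_k/dt` is `(m+1)·x_k^{(m+1)}`). -/
def IsSolSD (x : ℤ → LaurentSeries K) : Prop :=
  ∀ k m : ℤ, ((m + 1 : ℤ) : K) * (x k).coeff (m + 1) =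
    ((1 - x k * x k) * (x (k + 1) - x (k - 1))).coeff m

/-- A family `(x_k(t), y_k(t))_{k ∈ ℤ}` of formal Laurent series is a solution of the first
Toeplitz vector field: `dx_k/dt = (1 - x_k y_k)(x_{k+1} - x_{k-1})`,
`dy_k/dt = (1 - x_k y_k)(y_{k+1} - y_{k-1})`. -/
def IsSolT (x y : ℤ → LaurentSeries K) : Prop :=
  ∀ k m : ℤ,
    ((m + 1 : ℤ) : K) * (x k).coeff (m + 1) =
      ((1 - x k * y k) * (x (k + 1) - x (k - 1))).coeff m ∧
    ((m + 1 : ℤ) : K) * (y k).coeff (m + 1) =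
      ((1 - x k * y k) * (y (k + 1) - y (k - 1))).coeff m

end SingConf

namespace SingConf

/-- Indices `k` with `|k - n| ≥ 2`. -/
abbrev OffSD (n : ℤ) := {k : ℤ // k ≤ n - 2 ∨ n + 2 ≤ k}

/-- Indeterminates: the `a_k` (`|k - n| ≥ 2`), `a₊, a₋` (a `Bool`), and `u_1, …, u_N`. -/
abbrev IdxSD (n : ℤ) (N : ℕ) := OffSD n ⊕ (Bool ⊕ {i : ℕ // 1 ≤ i ∧ i ≤ N})

/-- The field of rational functions over `ℚ` in the indeterminates
`a_k (|k - n| ≥ 2), a₊, a₋, u_1, …, u_N`. -/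
abbrev KSD (n : ℤ) (N : ℕ) := FractionRing (MvPolynomial (IdxSD n N) ℚ)

/-- The indeterminate `a₊`. -/
def apSD (n : ℤ) (N : ℕ) : KSD n N :=
  algebraMap (MvPolynomial (IdxSD n N) ℚ) _ (MvPolynomial.X (Sum.inr (Sum.inl true)))

/-- The indeterminate `a₋`. -/
def amSD (n : ℤ) (N : ℕ) : KSD n N :=
  algebraMap (MvPolynomial (IdxSD n N) ℚ) _ (MvPolynomial.X (Sum.inr (Sum.inl false)))

/-- The parameters `a_k`, with the conventions `a_{n-1} = 1`, `a_{n+1} = -1`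
(and the junk value `a_n = 0`; `a_n` does not exist). -/
def avSD (n : ℤ) (N : ℕ) : ℤ → KSD n N := fun k =>
  if k = n + 1 then -1
  else if k = n - 1 then 1
  else if h : k ≤ n - 2 ∨ n + 2 ≤ k then
    algebraMap (MvPolynomial (IdxSD n N) ℚ) _ (MvPolynomial.X (Sum.inl ⟨k, h⟩))
  else 0

/-- The indeterminates `u_1, …, u_N` (with junk value `0` out of range). -/
def uvSD (n : ℤ) (N : ℕ) : ℕ → KSD n N := fun i =>
  if h : 1 ≤ i ∧ i ≤ N then
    algebraMap (MvPolynomial (IdxSD n N) ℚ) _ (MvPolynomial.X (Sum.inr (Sum.inr ⟨i, h⟩)))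
  else 0

/-- The time-dependent parameters `u(t) = (u_1 + t, u_2, …, u_N)`. -/
def utSD (n : ℤ) (N : ℕ) : ℕ → LaurentSeries (KSD n N) := fun i =>
  HahnSeries.C (uvSD n N i) + (if i = 1 then HahnSeries.single (1 : ℤ) 1 else 0)

/-- `x(t)` is *the* formal Laurent solution over `KSD n N` of the self-dual Toeplitz lattice
such that only `x_n(t)` has a pole and `x_n(t) = -ε/(2t) + O(1)`,
`x_{n±1}(t) = ∓ε + 4a_± t + O(t²)`, `x_k(t) = ε a_k + O(t)` for `|k - n| ≥ 2`. -/
def IsTheSDSol (n : ℤ) (N : ℕ) (ε : KSD n N) (x : ℤ → LaurentSeries (KSD n N)) : Prop :=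
  IsSolSD x ∧ (∀ k, k ≠ n → BigO (x k) 0) ∧ BigO (x n) (-1) ∧
  (x n).coeff (-1) = -ε / 2 ∧
  (x (n + 1)).coeff 0 = -ε ∧ (x (n - 1)).coeff 0 = ε ∧
  (x (n + 1)).coeff 1 = 4 * ε * apSD n N ∧ (x (n - 1)).coeff 1 = 4 * ε * amSD n N ∧
  (∀ k, 2 ≤ |k - n| → (x k).coeff 0 = ε * avSD n N k)

end SingConf

namespace SingConf

section Alg
variable {A : Type*} [CommRing A]

lemma tele_Icc (φ : ℤ → A) (p q : ℤ) (h : p - 1 ≤ q) :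
    ∑ l ∈ Finset.Icc p q, (φ l - φ (l - 1)) = φ q - φ (p - 1) := by
  induction q, h using Int.leInduction with
  | base => simp
  | succ q h ih =>
    have : Finset.Icc p (q + 1) = insert (q + 1) (Finset.Icc p q) := by
      ext l; simp only [Finset.mem_Icc, Finset.mem_insert]; omega
    rw [this, Finset.sum_insert (by simp), ih]
    simp

lemma L1e_zero (x y : ℤ → A) (i j : ℤ) (h : i + 1 < j) : L1e x y i j = 0 := by
  simp [L1e, not_le.mpr h]

lemma L1pow_zero (x y : ℤ → A) (s : ℕ) : ∀ (i j : ℤ), i + s < j → L1pow x y s i j = 0 := by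
  induction s with
  | zero => intro i j h; simp only [L1pow]; rw [if_neg]; push_cast at h; omega
  | succ s ih =>
    intro i j h
    simp only [L1pow]
    rw [Finset.Icc_eq_empty]; · simp
    push_cast at h; omega

lemma L1pow_ext (x y : ℤ → A) (s : ℕ) (i j p q : ℤ) (hp : p ≤ j - 1) (hq : i + s ≤ q) :
    L1pow x y (s + 1) i j = ∑ l ∈ Finset.Icc p q, L1pow x y s i l * L1e x y l j := by
  simp only [L1pow]
  apply Finset.sum_subset
  · exact Finset.Icc_subset_Icc hp hq
  · intro l hl hl'
    simp only [Finset.mem_Icc, not_and_or, not_le] at hl hl'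
    rcases hl' with h | h
    · rw [L1e_zero _ _ _ _ (by omega), mul_zero]
    · rw [L1pow_zero _ _ _ _ _ h, zero_mul]

lemma L1pow_left (x y : ℤ → A) (s : ℕ) : ∀ (i j p q : ℤ), p ≤ j - s → i + 1 ≤ q →
    L1pow x y (s + 1) i j = ∑ l ∈ Finset.Icc p q, L1e x y i l * L1pow x y s l j := by
  induction s with
  | zero =>
    intro i j p q hp hq
    rw [L1pow_ext x y 0 i j (min i (j - 1)) (max i j) (by simp) (by simp)]
    simp only [L1pow, ite_mul, mul_ite, one_mul, mul_one, zero_mul, mul_zero]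
    rw [Finset.sum_ite_eq, Finset.sum_ite_eq']
    push_cast at hp
    rw [if_pos (by simp)]
    split_ifs with h
    · rfl
    · simp only [Finset.mem_Icc, not_and_or, not_le] at h
      rw [L1e_zero]; omega
  | succ s ih =>
    intro i j p q hp hq
    push_cast at hp
    rw [L1pow_ext x y (s + 1) i j (j - 1) (q + s) (by omega) (by push_cast; omega)]
    have h1 : ∀ l ∈ Finset.Icc (j - 1) (q + s), L1pow x y (s + 1) i l * L1e x y l j =
        ∑ m ∈ Finset.Icc p q, L1e x y i m * L1pow x y s m l * L1e x y l j := by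
      intro l hl
      simp only [Finset.mem_Icc] at hl
      rw [ih i l p q (by omega) hq, Finset.sum_mul]
    rw [Finset.sum_congr rfl h1, Finset.sum_comm]
    apply Finset.sum_congr rfl
    intro m hm
    simp only [Finset.mem_Icc] at hm
    rw [L1pow_ext x y s m j (j - 1) (q + s) (by omega) (by omega), Finset.mul_sum]
    apply Finset.sum_congr rfl
    intros; ring

/-- partial row sum -/
def aS (x : ℤ → A) (s : ℕ) (i j : ℤ) : A :=
  ∑ l ∈ Finset.Icc (j - 1) (i + s), x l * L1pow x x s i l

/-- partial column sum -/
def bS (x : ℤ → A) (s : ℕ) (i j : ℤ) : A :=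
  ∑ l ∈ Finset.Icc (j - s) (i + 1), x (l - 1) * L1pow x x s l j

lemma Icc_cons (p q : ℤ) (h : p ≤ q) : Finset.Icc p q = insert p (Finset.Icc (p + 1) q) := by
  ext l; simp only [Finset.mem_Icc, Finset.mem_insert]; omega

lemma Icc_snoc (p q : ℤ) (h : p ≤ q) : Finset.Icc p q = insert q (Finset.Icc p (q - 1)) := by
  ext l; simp only [Finset.mem_Icc, Finset.mem_insert]; omega

lemma aS_step (x : ℤ → A) (s : ℕ) (i j : ℤ) :
    aS x s i j = aS x s i (j + 1) + x (j - 1) * L1pow x x s i (j - 1) := by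
  unfold aS
  rcases le_or_gt (j - 1) (i + s) with h | h
  · rw [Icc_cons _ _ h, Finset.sum_insert (by simp)]
    rw [show j - 1 + 1 = j by ring, show j + 1 - 1 = j by ring]; ring
  · rw [Finset.Icc_eq_empty (by omega), Finset.Icc_eq_empty (by omega), L1pow_zero _ _ _ _ _ h]
    simp

lemma bS_step (x : ℤ → A) (s : ℕ) (i j : ℤ) :
    bS x s i j = bS x s (i - 1) j + x i * L1pow x x s (i + 1) j := by
  unfold bS
  rcases le_or_gt (j - s) (i + 1) with h | h
  · rw [Icc_snoc _ _ h, Finset.sum_insert (by simp)]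
    rw [show i + 1 - 1 = i by ring, show i - 1 + 1 = i by ring]; ring
  · rw [Finset.Icc_eq_empty (by omega), Finset.Icc_eq_empty (by omega),
      L1pow_zero _ _ _ _ _ (by omega)]
    simp

lemma aS_T (x : ℤ → A) (s : ℕ) (i j : ℤ) :
    L1pow x x (s + 1) i j = L1pow x x s i (j - 1) - x (j - 1) * aS x s i j := by
  unfold aS
  simp only [L1pow, Finset.mul_sum]
  have : ∀ l ∈ Finset.Icc (j - 1) (i + s), L1pow x x s i l * L1e x x l j =
      (if l = j - 1 then L1pow x x s i l else 0) - x (j - 1) * (x l * L1pow x x s i l) := by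
    intro l hl
    simp only [Finset.mem_Icc] at hl
    unfold L1e
    rw [if_pos (by omega)]
    by_cases h : l = j - 1
    · rw [if_pos h, if_pos (by omega)]; ring
    · rw [if_neg h, if_neg (by omega)]; ring
  rw [Finset.sum_congr rfl this, Finset.sum_sub_distrib, Finset.sum_ite_eq']
  congr 1
  split_ifs with h
  · rfl
  · simp only [Finset.mem_Icc, not_and_or, not_le] at h
    rw [L1pow_zero]; omega

lemma bS_T (x : ℤ → A) (s : ℕ) (i j : ℤ) :
    L1pow x x (s + 1) i j = L1pow x x s (i + 1) j - x i * bS x s i j := by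
  unfold bS
  rw [L1pow_left x x s i j (j - s) (i + 1) le_rfl le_rfl, Finset.mul_sum]
  have : ∀ l ∈ Finset.Icc (j - s) (i + 1), L1e x x i l * L1pow x x s l j =
      (if l = i + 1 then L1pow x x s l j else 0) - x i * (x (l - 1) * L1pow x x s l j) := by
    intro l hl
    simp only [Finset.mem_Icc] at hl
    unfold L1e
    rw [if_pos (by omega)]
    by_cases h : l = i + 1
    · rw [if_pos h, if_pos (by omega)]; ring
    · rw [if_neg h, if_neg (by omega)]; ring
  rw [Finset.sum_congr rfl this, Finset.sum_sub_distrib, Finset.sum_ite_eq']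
  congr 1
  split_ifs with h
  · rfl
  · simp only [Finset.mem_Icc, not_and_or, not_le] at h
    rw [L1pow_zero]; omega

/-- commutator with the tridiagonal matrix -/
def comM (x : ℤ → A) (S : ℤ → ℤ → A) (i j : ℤ) : A :=
  x i * x (i - 1) * S i j + (1 - x i * x i) * S (i + 1) j - S (i - 1) j
    - S i j * (x j * x (j - 1)) - S i (j - 1) * (1 - x (j - 1) * x (j - 1)) + S i (j + 1)

variable (D : Derivation ℤ A A) (τ : A) (x : ℤ → A)
  (hx : ∀ k, D (x k) = τ * ((1 - x k * x k) * (x (k + 1) - x (k - 1))))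
include hx

lemma lax_L (i j : ℤ) : D (L1e x x i j) = τ * comM x (L1e x x) i j := by
  unfold comM
  rcases lt_trichotomy j (i + 1) with h | h | h
  · have h1 : D (L1e x x i j) = -(x i * (τ * ((1 - x (j-1) * x (j-1)) * (x (j - 1 + 1) - x (j - 1 - 1))))
        + x (j-1) * (τ * ((1 - x i * x i) * (x (i + 1) - x (i - 1))))) := by
      unfold L1e
      rw [if_pos (by omega), if_neg (by omega)]
      simp [hx]
    rw [h1]
    unfold L1e
    rw [show j - 1 + 1 = j by ring]
    rcases lt_or_eq_of_le (show j ≤ i by omega) with h2 | h2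
    · rw [if_pos (by omega), if_neg (by omega), if_pos (by omega), if_neg (by omega),
        if_pos (by omega), if_neg (by omega), if_pos (by omega), if_neg (by omega),
        if_pos (by omega), if_neg (by omega), show j + 1 - 1 = j by ring]
      ring
    · subst h2
      rw [if_pos (by omega), if_neg (by omega), if_pos (by omega), if_neg (by omega),
        if_pos (by omega), if_pos (by omega), if_pos (by omega), if_neg (by omega),
        if_pos (by omega), if_pos (by omega), show j + 1 - 1 = j by ring]
      ring
  · subst h
    have h1 : D (L1e x x i (i + 1)) = -(x i * (τ * ((1 - x i * x i) * (x (i + 1) - x (i - 1))))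
        + x i * (τ * ((1 - x i * x i) * (x (i + 1) - x (i - 1))))) := by
      unfold L1e
      rw [if_pos (by omega), if_pos (by omega)]
      simp [hx]
    rw [h1]
    unfold L1e
    rw [show i + 1 - 1 = i by ring]
    rw [if_pos (by omega), if_pos (by omega), if_pos (by omega), if_neg (by omega),
        if_neg (by omega), if_pos (by omega), if_neg (by omega), if_neg (by omega)]
    ring
  · rcases eq_or_lt_of_le (show i + 2 ≤ j by omega) with h2 | h2
    · subst h2
      unfold L1e
      rw [show i + 2 - 1 = i + 1 by ring, if_neg (by omega), if_pos (by omega), if_pos (by omega),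
        if_neg (by omega), if_pos (by omega), if_pos (by omega), if_neg (by omega)]
      simp; ring_nf
    · rw [L1e_zero, L1e_zero, L1e_zero, L1e_zero, L1e_zero] <;> first | omega | simp

lemma lax_pow (s : ℕ) : ∀ i j : ℤ, D (L1pow x x s i j) = τ * comM x (L1pow x x s) i j := by
  induction s with
  | zero =>
    intro i j
    have h0 : D (L1pow x x 0 i j) = 0 := by
      simp only [L1pow]; split_ifs <;> simp
    rw [h0]
    unfold comM
    simp only [L1pow]
    by_cases h1 : i = j
    · subst h1; simp [show i - 1 ≠ i by omega, show i ≠ i - 1 by omega]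
    · by_cases h2 : i + 1 = j
      · subst h2; simp [show i - 1 ≠ i + 1 by omega, show i ≠ i + 1 + 1 by omega]
      · by_cases h3 : i - 1 = j
        · subst h3; simp [show i + 1 ≠ i - 1 by omega, show i ≠ i - 1 by omega, show i ≠ i - 1 - 1 by omega]
        · rw [if_neg h1, if_neg h2, if_neg h3, if_neg (by omega), if_neg (by omega)]; simp
  | succ s ih =>
    intro i j
    obtain ⟨p, hp⟩ : ∃ p : ℤ, p = min (j - 2) (i - 2) := ⟨_, rfl⟩
    obtain ⟨q, hq⟩ : ∃ q : ℤ, q = max (i + s + 1) (j + 2) := ⟨_, rfl⟩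
    have e : ∀ i' j', i - 1 ≤ i' → i' ≤ i + 1 → j - 1 ≤ j' → j' ≤ j + 1 →
        L1pow x x (s + 1) i' j' = ∑ l ∈ Finset.Icc p q, L1pow x x s i' l * L1e x x l j' := by
      intro i' j' _ _ _ _
      exact L1pow_ext x x s i' j' p q (by omega) (by omega)
    rw [e i j (by omega) (by omega) (by omega) (by omega)]
    unfold comM
    rw [e i j (by omega) (by omega) (by omega) (by omega),
      e (i+1) j (by omega) (by omega) (by omega) (by omega),
      e (i-1) j (by omega) (by omega) (by omega) (by omega),
      e i (j-1) (by omega) (by omega) (by omega) (by omega),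
      e i (j+1) (by omega) (by omega) (by omega) (by omega)]
    have t1 := tele_Icc (fun l => L1pow x x s i l * (1 - x l * x l) * L1e x x (l + 1) j) p q
      (by omega)
    have t2 := tele_Icc (fun l => L1pow x x s i (l + 1) * L1e x x l j) p q (by omega)
    rw [L1pow_zero x x s i q (by omega), L1e_zero x x (p - 1 + 1) j (by omega)] at t1
    rw [L1pow_zero x x s i (q + 1) (by omega), L1e_zero x x (p - 1) j (by omega)] at t2
    simp only [zero_mul, mul_zero, sub_zero] at t1 t2
    rw [map_sum]
    have : ∀ l ∈ Finset.Icc p q, D (L1pow x x s i l * L1e x x l j) =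
      τ * ((x i * x (i - 1)) * (L1pow x x s i l * L1e x x l j) +
        (1 - x i * x i) * (L1pow x x s (i+1) l * L1e x x l j)
        - L1pow x x s (i-1) l * L1e x x l j
        - (L1pow x x s i l * L1e x x l j) * (x j * x (j - 1))
        - (L1pow x x s i l * L1e x x l (j-1)) * (1 - x (j - 1) * x (j - 1))
        + L1pow x x s i l * L1e x x l (j+1)
        + (L1pow x x s i l * (1 - x l * x l) * L1e x x (l + 1) j
          - L1pow x x s i (l-1) * (1 - x (l-1) * x (l-1)) * L1e x x (l - 1 + 1) j)
        + (L1pow x x s i (l + 1) * L1e x x l j - L1pow x x s i (l - 1 + 1) * L1e x x (l-1) j)) := by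
      intro l _
      rw [D.leibniz, ih, lax_L D τ x hx]
      simp only [smul_eq_mul, comM, show l - 1 + 1 = l by ring]
      ring
    rw [Finset.sum_congr rfl this, ← Finset.mul_sum]
    simp only [Finset.sum_add_distrib, Finset.sum_sub_distrib, ← Finset.mul_sum, ← Finset.sum_mul]
      at t1 t2 ⊢
    rw [t1, t2]; ring

variable [IsDomain A] (hne : ∀ k, x k ≠ 0)
include hne

lemma aS_D (s : ℕ) (i j : ℤ) : D (aS x s i j) = τ * (x i * x (i - 1) * aS x s i j +
    (1 - x i * x i) * aS x s (i + 1) j - aS x s (i - 1) j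
    - (1 - x (j - 2) * x (j - 2)) * x (j - 1) * L1pow x x s i (j - 2)
    - x (j - 2) * L1pow x x s i (j - 1)) := by
  apply mul_left_cancel₀ (hne (j - 1))
  have h0 : D (L1pow x x (s + 1) i j) = D (L1pow x x s i (j - 1) - x (j - 1) * aS x s i j) := by
    rw [aS_T]
  rw [map_sub, D.leibniz, lax_pow D τ x hx, lax_pow D τ x hx, hx] at h0
  unfold comM at h0
  simp only [smul_eq_mul] at h0
  have e1 := aS_T x s i j
  have e2 := aS_T x s (i + 1) j
  have e3 := aS_T x s (i - 1) j
  have e4 := aS_T x s i (j - 1)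
  have e5 := aS_T x s i (j + 1)
  have e6 := aS_step x s i j
  have e7 := aS_step x s i (j - 1)
  rw [show j - 1 + 1 = j by ring, show j - 1 - 1 = j - 2 by ring] at *
  rw [show j + 1 - 1 = j by ring] at *
  rw [e5, e4, e3, e2, e1, e7] at h0
  have e8 : aS x s i (j + 1) = aS x s i j - x (j - 1) * L1pow x x s i (j - 1) := by rw [e6]; ring
  rw [e8] at h0
  linear_combination h0

lemma bS_D (s : ℕ) (i j : ℤ) : D (bS x s i j) = τ * (- (x j * x (j - 1)) * bS x s i j -
    (1 - x (j - 1) * x (j - 1)) * bS x s i (j - 1) + bS x s i (j + 1)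
    + x i * (1 - x (i + 1) * x (i + 1)) * L1pow x x s (i + 2) j
    + x (i + 1) * L1pow x x s (i + 1) j) := by
  apply mul_left_cancel₀ (hne i)
  have h0 : D (L1pow x x (s + 1) i j) = D (L1pow x x s (i + 1) j - x i * bS x s i j) := by
    rw [bS_T]
  rw [map_sub, D.leibniz, lax_pow D τ x hx, lax_pow D τ x hx, hx] at h0
  unfold comM at h0
  simp only [smul_eq_mul] at h0
  have e1 := bS_T x s i j
  have e2 := bS_T x s (i + 1) j
  have e3 := bS_T x s (i - 1) j
  have e4 := bS_T x s i (j - 1)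
  have e5 := bS_T x s i (j + 1)
  have e6 := bS_step x s i j
  have e7 := bS_step x s (i + 1) j
  rw [show i + 1 - 1 = i by ring, show i + 1 + 1 = i + 2 by ring] at *
  rw [show i - 1 + 1 = i by ring] at *
  rw [e5, e4, e3, e2, e1, e7] at h0
  have e8 : bS x s (i - 1) j = bS x s i j - x i * L1pow x x s (i + 1) j := by rw [e6]; ring
  rw [e8] at h0
  linear_combination h0

lemma ab_D (s : ℕ) (k : ℤ) :
    D ((1 - x k * x k) * (aS x s (k + 1) (k + 1) + bS x s k k)) =
    τ * ((1 - x k * x k) * (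
      (1 - x (k+1) * x (k+1)) * (aS x s (k + 1 + 1) (k + 1 + 1) + bS x s (k + 1) (k + 1))
      - (1 - x (k-1) * x (k-1)) * (aS x s (k - 1 + 1) (k - 1 + 1) + bS x s (k - 1) (k - 1)))) := by
  have d1 := aS_D D τ x hx hne s (k + 1) (k + 1)
  have d2 := bS_D D τ x hx hne s k k
  have s1 := aS_step x s (k + 2) (k + 1)
  have s2 := aS_step x s k k
  have s3 := bS_step x s k (k - 1)
  have s4 := bS_step x s (k + 1) (k + 1)
  have s5 := aS_step x s (k + 1) k
  have s6 := bS_step x s (k + 1) k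
  have r1 := aS_T x s (k + 1) (k + 1)
  have r2 := bS_T x s k k
  have r3 := aS_T x s k k
  have r4 := bS_T x s (k + 1) (k + 1)
  have r5 := aS_T x s (k + 1) k
  have r6 := bS_T x s (k + 1) k
  rw [D.leibniz, map_add, d1, d2, map_sub, D.leibniz, hx, D.map_one_eq_zero]
  simp only [smul_eq_mul]
  simp only [show k + 1 + 1 = k + 2 by ring, show k + 1 - 1 = k by ring, show k - 1 + 1 = k by ring,
    show k + 1 - 2 = k - 1 by ring] at *
  rw [s6] at r6
  rw [s5] at r5
  rw [s1, s4, s3, show aS x s k (k + 1) = aS x s k k - x (k-1) * L1pow x x s k (k-1) by rw [s2]; ring]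
  rw [s4] at r4
  linear_combination τ * (1 - x k * x k) * (-x (k+1) * r1 + x (k-1) * r2 - x (k-1) * r3
    + x (k+1) * r4 + 2 * x k * (r5 - r6))

end Alg
end SingConf

namespace SingConf

section Alg2
variable {A : Type*} [CommRing A]

lemma GamSD_eq (N : ℕ) (u : ℕ → A) (x : ℤ → A) (k : ℤ) :
    GamSD N u x k = (∑ i ∈ Finset.Icc 1 N, u i * ((1 - x k * x k) *
      (aS x (i - 1) (k + 1) (k + 1) + bS x (i - 1) k k))) + (k : A) * x k := by
  unfold GamSD aS bS
  rw [Finset.mul_sum]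
  congr 1
  apply Finset.sum_congr rfl
  intro i hi
  simp only [Finset.mem_Icc] at hi
  have h1 : k + (i : ℤ) = k + 1 + ((i - 1 : ℕ) : ℤ) := by omega
  have h2 : k - (i : ℤ) + 1 = k - ((i - 1 : ℕ) : ℤ) := by omega
  rw [← h1, ← h2, show k + 1 - 1 = k by ring]
  ring

lemma aS_zero (x : ℤ → A) (k : ℤ) : aS x 0 (k + 1) (k + 1) = x (k + 1) := by
  unfold aS
  simp only [L1pow, mul_ite, mul_one, mul_zero, Finset.sum_ite_eq]
  simp

lemma bS_zero (x : ℤ → A) (k : ℤ) : bS x 0 k k = x (k - 1) := by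
  unfold bS
  simp only [L1pow, mul_ite, mul_one, mul_zero, Finset.sum_ite_eq']
  simp

lemma Gam_D [IsDomain A] (D : Derivation ℤ A A) (τ : A) (x : ℤ → A)
    (hx : ∀ k, D (x k) = τ * ((1 - x k * x k) * (x (k + 1) - x (k - 1))))
    (hne : ∀ k, x k ≠ 0) (N : ℕ) (hN : 1 ≤ N) (u : ℕ → A)
    (hu : ∀ i, D (u i) = if i = 1 then τ else 0) (k : ℤ) :
    D (GamSD N u x k) = τ * ((1 - x k * x k) * (GamSD N u x (k + 1) - GamSD N u x (k - 1))) := by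
  rw [GamSD_eq, GamSD_eq, GamSD_eq, map_add, map_sum]
  have h1 : ∀ i ∈ Finset.Icc 1 N, D (u i * ((1 - x k * x k) *
      (aS x (i - 1) (k + 1) (k + 1) + bS x (i - 1) k k))) =
      (if i = 1 then τ * ((1 - x k * x k) * (x (k+1) + x (k - 1))) else 0) +
      τ * ((1 - x k * x k) * (u i * ((1 - x (k+1) * x (k+1)) *
      (aS x (i - 1) (k + 1 + 1) (k + 1 + 1) + bS x (i - 1) (k + 1) (k + 1))) -
      u i * ((1 - x (k-1) * x (k-1)) *
      (aS x (i - 1) (k - 1 + 1) (k - 1 + 1) + bS x (i - 1) (k - 1) (k - 1))))) := by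
    intro i hi
    rw [D.leibniz, ab_D D τ x hx hne, hu]
    simp only [smul_eq_mul]
    by_cases h : i = 1
    · subst h
      simp only [if_true, Nat.sub_self, aS_zero, bS_zero]; ring
    · simp only [if_neg h]; ring
  rw [Finset.sum_congr rfl h1, Finset.sum_add_distrib, Finset.sum_ite_eq', if_pos (by simp [hN]),
    ← Finset.mul_sum, ← Finset.mul_sum, Finset.sum_sub_distrib]
  have h2 : D ((k : A) * x k) = k * D (x k) := by
    rw [D.leibniz]; simp
  rw [h2, hx]
  push_cast
  ring

lemma L1e_mem (T : Subring A) (x : ℤ → A) (i j : ℤ) (h : ∀ l, j - 1 ≤ l → l ≤ i → x l ∈ T) :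
    L1e x x i j ∈ T := by
  unfold L1e
  split_ifs with h1 h2
  · exact T.add_mem (T.neg_mem (T.mul_mem (h _ (by omega) le_rfl) (h _ le_rfl (by omega)))) T.one_mem
  · exact T.add_mem (T.neg_mem (T.mul_mem (h _ (by omega) le_rfl) (h _ le_rfl (by omega)))) T.zero_mem
  · exact T.zero_mem

lemma L1pow_mem (T : Subring A) (x : ℤ → A) (s : ℕ) : ∀ (i j : ℤ),
    (∀ l, j - s ≤ l → l ≤ i + s - 1 → x l ∈ T) → L1pow x x s i j ∈ T := by
  induction s with
  | zero => intro i j _; simp only [L1pow]; split_ifs <;> simp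
  | succ s ih =>
    intro i j h
    push_cast at h
    simp only [L1pow]
    apply T.sum_mem
    intro l hl
    simp only [Finset.mem_Icc] at hl
    apply T.mul_mem
    · exact ih i l fun m h1 h2 => h m (by omega) (by omega)
    · exact L1e_mem T x l j fun m h1 h2 => h m (by omega) (by omega)

lemma L1pow_diag (x : ℤ → A) (s : ℕ) : ∀ i : ℤ,
    L1pow x x s i (i + s) = ∏ j ∈ Finset.range s, (1 - x (i + j) * x (i + j)) := by
  induction s with
  | zero => intro i; simp [L1pow]
  | succ s ih =>
    intro i
    simp only [L1pow]
    push_cast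
    rw [show i + ((s:ℤ) + 1) - 1 = i + s by ring, Finset.Icc_self, Finset.sum_singleton, ih,
      Finset.prod_range_succ]
    congr 1
    unfold L1e
    rw [if_pos (by omega), if_pos (by omega), show i + ((s:ℤ) + 1) - 1 = i + s by ring]
    ring

/-- top coefficient, upward -/
def topU (x : ℤ → A) (N : ℕ) (k : ℤ) : A := ∏ j ∈ Finset.range N, (1 - x (k + j) * x (k + j))
/-- top coefficient, downward -/
def topD (x : ℤ → A) (N : ℕ) (k : ℤ) : A := ∏ j ∈ Finset.range N, (1 - x (k - j) * x (k - j))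

lemma vmem {T : Subring A} {a : A} (h : a ∈ T) : 1 - a * a ∈ T :=
  T.sub_mem T.one_mem (T.mul_mem h h)

lemma term1_mem (T : Subring A) (x : ℤ → A) (N : ℕ) (k : ℤ)
    (h : ∀ l, k - N < l → l < k + N → x l ∈ T) (i : ℕ) (hi : i ∈ Finset.Icc 1 N) (l : ℤ)
    (hl : l ∈ Finset.Icc k (k + (i : ℤ))) : L1pow x x (i - 1) (k + 1) l ∈ T := by
  simp only [Finset.mem_Icc] at hi hl
  apply L1pow_mem
  intro m h1 h2
  exact h m (by omega) (by omega)

lemma term2_mem (T : Subring A) (x : ℤ → A) (N : ℕ) (k : ℤ)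
    (h : ∀ l, k - N < l → l < k + N → x l ∈ T) (i : ℕ) (hi : i ∈ Finset.Icc 1 N) (l : ℤ)
    (hl : l ∈ Finset.Icc (k - (i : ℤ) + 1) (k + 1)) : L1pow x x (i - 1) l k ∈ T := by
  simp only [Finset.mem_Icc] at hi hl
  apply L1pow_mem
  intro m h1 h2
  exact h m (by omega) (by omega)

lemma Gam_mem (T : Subring A) (N : ℕ) (hN : 1 ≤ N) (u : ℕ → A) (hu : ∀ i, u i ∈ T) (x : ℤ → A) (k : ℤ)
    (h : ∀ l, k - N ≤ l → l ≤ k + N → x l ∈ T) : GamSD N u x k ∈ T := by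
  unfold GamSD
  refine T.add_mem (T.mul_mem (vmem (h _ (by omega) (by omega))) (T.sum_mem fun i hi =>
    T.mul_mem (hu i) (T.add_mem (T.sum_mem fun l hl => T.mul_mem ?_ ?_)
      (T.sum_mem fun l hl => T.mul_mem ?_ ?_)))) (T.mul_mem (intCast_mem T k) (h _ (by omega) (by omega)))
  · simp only [Finset.mem_Icc] at hi hl; exact h _ (by omega) (by omega)
  · exact term1_mem T x N k (fun m h1 h2 => h m (by omega) (by omega)) i hi l hl
  · simp only [Finset.mem_Icc] at hi hl; exact h _ (by omega) (by omega)
  · exact term2_mem T x N k (fun m h1 h2 => h m (by omega) (by omega)) i hi l hl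

lemma topU_mem (T : Subring A) (N : ℕ) (x : ℤ → A) (k : ℤ)
    (h : ∀ l, k - N ≤ l → l < k + N → x l ∈ T) : topU x N k ∈ T := by
  apply T.prod_mem
  intro j hj
  simp only [Finset.mem_range] at hj
  exact vmem (h _ (by omega) (by omega))

lemma topD_mem (T : Subring A) (N : ℕ) (x : ℤ → A) (k : ℤ)
    (h : ∀ l, k - N < l → l ≤ k + N → x l ∈ T) : topD x N k ∈ T := by
  apply T.prod_mem
  intro j hj
  simp only [Finset.mem_range] at hj
  exact vmem (h _ (by omega) (by omega))

lemma sum_split {ι : Type*} [DecidableEq ι] (T : Subring A) (s : Finset ι) (a : ι) (ha : a ∈ s) (f : ι → A) (c : A)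
    (h : ∀ i ∈ s, i ≠ a → f i ∈ T) (h2 : f a - c ∈ T) : (∑ i ∈ s, f i) - c ∈ T := by
  rw [← Finset.add_sum_erase s f ha]
  have : f a + ∑ i ∈ s.erase a, f i - c = (f a - c) + ∑ i ∈ s.erase a, f i := by ring
  rw [this]
  apply T.add_mem h2
  apply T.sum_mem
  intro i hi
  simp only [Finset.mem_erase] at hi
  exact h i hi.2 hi.1

lemma RestU_mem (T : Subring A) (N : ℕ) (hN : 1 ≤ N) (u : ℕ → A) (hu : ∀ i, u i ∈ T) (x : ℤ → A)
    (k : ℤ) (h : ∀ l, k - N ≤ l → l < k + N → x l ∈ T) :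
    GamSD N u x k - u N * topU x N k * x (k + N) ∈ T := by
  have hv := vmem (T := T) (h k (by omega) (by omega))
  have e1 : GamSD N u x k - u N * topU x N k * x (k + N) = (1 - x k * x k) *
    ((∑ i ∈ Finset.Icc 1 N, u i *
      ((∑ l ∈ Finset.Icc k (k + (i : ℤ)), x l * L1pow x x (i - 1) (k + 1) l) +
        ∑ l ∈ Finset.Icc (k - (i : ℤ) + 1) (k + 1), x (l - 1) * L1pow x x (i - 1) l k))
      - u N * (x (k + N) * L1pow x x (N - 1) (k + 1) (k + N)))
     + (k : A) * x k := by
    have : topU x N k = (1 - x k * x k) * L1pow x x (N - 1) (k + 1) (k + N) := by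
      obtain ⟨M, rfl⟩ : ∃ M, N = M + 1 := ⟨N - 1, by omega⟩
      have := L1pow_diag x M (k + 1)
      rw [show M + 1 - 1 = M by omega]
      push_cast
      rw [show k + ((M:ℤ) + 1) = k + 1 + M by ring, this]
      unfold topU
      rw [Finset.prod_range_succ', mul_comm]
      simp [add_assoc, add_comm (1 : ℤ)]
    rw [this]; unfold GamSD; ring
  rw [e1]
  refine T.add_mem (T.mul_mem hv ?_) (T.mul_mem (intCast_mem T k) (h _ (by omega) (by omega)))
  have m1 : ∀ i ∈ Finset.Icc 1 N, ∀ l ∈ Finset.Icc k (k + (i : ℤ)), l ≠ k + N →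
      x l * L1pow x x (i - 1) (k + 1) l ∈ T := by
    intro i hi l hl hne
    refine T.mul_mem ?_ (term1_mem T x N k (fun m h1 h2 => h m (by omega) (by omega)) i hi l hl)
    simp only [Finset.mem_Icc] at hi hl; exact h _ (by omega) (by omega)
  have m2 : ∀ i ∈ Finset.Icc 1 N,
      ∑ l ∈ Finset.Icc (k - (i : ℤ) + 1) (k + 1), x (l - 1) * L1pow x x (i - 1) l k ∈ T := by
    intro i hi
    refine T.sum_mem fun l hl => T.mul_mem ?_
      (term2_mem T x N k (fun m h1 h2 => h m (by omega) (by omega)) i hi l hl)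
    simp only [Finset.mem_Icc] at hi hl; exact h _ (by omega) (by omega)
  apply sum_split T _ N (by simp [hN])
  · intro i hi hne
    refine T.mul_mem (hu i) (T.add_mem (T.sum_mem fun l hl => m1 i hi l hl ?_) (m2 i hi))
    simp only [Finset.mem_Icc] at hi hl; omega
  · have hNN : N ∈ Finset.Icc 1 N := by simp [hN]
    rw [← mul_sub, add_sub_right_comm]
    refine T.mul_mem (hu N) (T.add_mem ?_ (m2 N hNN))
    apply sum_split T _ (k + N) (by simp)
    · intro l hl hne; exact m1 N hNN l hl hne
    · simp

lemma RestD_mem (T : Subring A) (N : ℕ) (hN : 1 ≤ N) (u : ℕ → A) (hu : ∀ i, u i ∈ T) (x : ℤ → A)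
    (k : ℤ) (h : ∀ l, k - N < l → l ≤ k + N → x l ∈ T) :
    GamSD N u x k - u N * topD x N k * x (k - N) ∈ T := by
  have hv := vmem (T := T) (h k (by omega) (by omega))
  have e1 : GamSD N u x k - u N * topD x N k * x (k - N) = (1 - x k * x k) *
    ((∑ i ∈ Finset.Icc 1 N, u i *
      ((∑ l ∈ Finset.Icc k (k + (i : ℤ)), x l * L1pow x x (i - 1) (k + 1) l) +
        ∑ l ∈ Finset.Icc (k - (i : ℤ) + 1) (k + 1), x (l - 1) * L1pow x x (i - 1) l k))
      - u N * (x (k - N + 1 - 1) * L1pow x x (N - 1) (k - N + 1) k))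
     + (k : A) * x k := by
    have : topD x N k = (1 - x k * x k) * L1pow x x (N - 1) (k - N + 1) k := by
      obtain ⟨M, rfl⟩ : ∃ M, N = M + 1 := ⟨N - 1, by omega⟩
      have := L1pow_diag x M (k - M)
      rw [show k - (M:ℤ) + M = k by ring] at this
      rw [show M + 1 - 1 = M by omega]
      push_cast
      rw [show k - ((M:ℤ) + 1) + 1 = k - M by ring, this]
      unfold topD
      rw [← Finset.prod_range_reflect, Finset.prod_range_succ, mul_comm]
      congr 1
      · simp
      · apply Finset.prod_congr rfl
        intro j hj
        simp only [Finset.mem_range] at hj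
        have : k - ((M + 1 - 1 - j : ℕ) : ℤ) = k - M + j := by omega
        rw [this]
    rw [this, show k - (N:ℤ) + 1 - 1 = k - N by ring]; unfold GamSD; ring
  rw [e1]
  refine T.add_mem (T.mul_mem hv ?_) (T.mul_mem (intCast_mem T k) (h _ (by omega) (by omega)))
  have m1 : ∀ i ∈ Finset.Icc 1 N, ∀ l ∈ Finset.Icc (k - (i : ℤ) + 1) (k + 1), l ≠ k - N + 1 →
      x (l - 1) * L1pow x x (i - 1) l k ∈ T := by
    intro i hi l hl hne
    refine T.mul_mem ?_ (term2_mem T x N k (fun m h1 h2 => h m (by omega) (by omega)) i hi l hl)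
    simp only [Finset.mem_Icc] at hi hl; exact h _ (by omega) (by omega)
  have m2 : ∀ i ∈ Finset.Icc 1 N,
      ∑ l ∈ Finset.Icc k (k + (i : ℤ)), x l * L1pow x x (i - 1) (k + 1) l ∈ T := by
    intro i hi
    refine T.sum_mem fun l hl => T.mul_mem ?_
      (term1_mem T x N k (fun m h1 h2 => h m (by omega) (by omega)) i hi l hl)
    simp only [Finset.mem_Icc] at hi hl; exact h _ (by omega) (by omega)
  apply sum_split T _ N (by simp [hN])
  · intro i hi hne
    refine T.mul_mem (hu i) (T.add_mem (m2 i hi) (T.sum_mem fun l hl => m1 i hi l hl ?_))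
    simp only [Finset.mem_Icc] at hi hl; omega
  · have hNN : N ∈ Finset.Icc 1 N := by simp [hN]
    rw [← mul_sub, add_sub_assoc]
    refine T.mul_mem (hu N) (T.add_mem (m2 N hNN) ?_)
    apply sum_split T _ (k - N + 1) (by simp)
    · intro l hl hne; exact m1 N hNN l hl hne
    · simp

variable {B : Type*} [CommRing B]

lemma L1e_map (f : A →+* B) (x : ℤ → A) (i j : ℤ) :
    f (L1e x x i j) = L1e (fun k => f (x k)) (fun k => f (x k)) i j := by
  unfold L1e; split_ifs <;> simp

lemma L1pow_map (f : A →+* B) (x : ℤ → A) (s : ℕ) : ∀ i j : ℤ,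
    f (L1pow x x s i j) = L1pow (fun k => f (x k)) (fun k => f (x k)) s i j := by
  induction s with
  | zero => intro i j; simp only [L1pow]; split_ifs <;> simp
  | succ s ih => intro i j; simp only [L1pow, map_sum, map_mul, ih, L1e_map]

lemma Gam_map (f : A →+* B) (N : ℕ) (u : ℕ → A) (x : ℤ → A) (k : ℤ) :
    f (GamSD N u x k) = GamSD N (fun i => f (u i)) (fun k => f (x k)) k := by
  unfold GamSD
  simp only [map_add, map_mul, map_sub, map_one, map_sum, L1pow_map, map_intCast]

lemma topU_map (f : A →+* B) (x : ℤ → A) (N : ℕ) (k : ℤ) :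
    f (topU x N k) = topU (fun k => f (x k)) N k := by
  simp [topU]

lemma topD_map (f : A →+* B) (x : ℤ → A) (N : ℕ) (k : ℤ) :
    f (topD x N k) = topD (fun k => f (x k)) N k := by
  simp [topD]

end Alg2
end SingConf

namespace SingConf

section Laurent
variable {K : Type*} [Field K]

lemma coeff_mul_mem (S : AddSubgroup K) (f g : LaurentSeries K) (m : ℤ)
    (h : ∀ i j, i + j = m → f.coeff i * g.coeff j ∈ S) : (f * g).coeff m ∈ S := by
  rw [HahnSeries.coeff_mul]
  refine sum_mem fun ij hij => h _ _ ?_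
  simp at hij
  exact hij.2.2

/-- leading term predicate -/
def Ld (f : LaurentSeries K) (m : ℤ) (c : K) : Prop := BigO f m ∧ f.coeff m = c

lemma BigO.mul {f g : LaurentSeries K} {a b : ℤ} (hf : BigO f a) (hg : BigO g b) :
    BigO (f * g) (a + b) := by
  intro i hi
  have := coeff_mul_mem (⊥ : AddSubgroup K) f g i (fun p q hpq => by
    rw [AddSubgroup.mem_bot]
    rcases lt_or_ge p a with h | h
    · rw [hf p h, zero_mul]
    · rw [hg q (by omega), mul_zero])
  simpa using this

lemma Ld.mul {f g : LaurentSeries K} {a b : ℤ} {c d : K} (hf : Ld f a c) (hg : Ld g b d) :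
    Ld (f * g) (a + b) (c * d) := by
  refine ⟨hf.1.mul hg.1, ?_⟩
  rw [HahnSeries.coeff_mul, Finset.sum_eq_single (a, b)]
  · simp [hf.2, hg.2]
  · rintro ⟨p, q⟩ hpq hne
    simp at hpq
    rcases lt_or_ge p a with h | h
    · simp [hf.1 p h]
    · rcases lt_or_ge q b with h' | h'
      · simp [hg.1 q h']
      · exfalso; apply hne
        have : p = a := by omega
        have : q = b := by omega
        simp_all
  · intro hn
    simp at hn
    by_cases h1 : f.coeff a = 0
    · simp [h1]
    · by_cases h2 : g.coeff b = 0
      · simp [h2]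
      · exact absurd (hn h1) h2

lemma BigO.ld {f : LaurentSeries K} {m : ℤ} (h : BigO f m) : Ld f m (f.coeff m) := ⟨h, rfl⟩

lemma BigO.mono {f : LaurentSeries K} {m m' : ℤ} (h : BigO f m) (hm : m' ≤ m) : BigO f m' :=
  fun i hi => h i (by omega)

lemma BigO.ld0 {f : LaurentSeries K} {m m' : ℤ} (h : BigO f m) (hm : m' < m) : Ld f m' 0 :=
  ⟨h.mono hm.le, h _ hm⟩

lemma Ld.bigO_succ {f : LaurentSeries K} {m : ℤ} (h : Ld f m 0) : BigO f (m + 1) := by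
  intro i hi
  rcases lt_or_eq_of_le (show i ≤ m by omega) with h1 | h1
  · exact h.1 i h1
  · rw [h1]; exact h.2

lemma Ld.uniq {f : LaurentSeries K} {m : ℤ} {c d : K} (h : Ld f m c) (h' : Ld f m d) : c = d :=
  h.2.symm.trans h'.2

lemma Ld.cast {f : LaurentSeries K} {m m' : ℤ} {c d : K} (h : Ld f m c) (hm : m = m')
    (hc : c = d) : Ld f m' d := by subst hm; subst hc; exact h

lemma BigO.add {f g : LaurentSeries K} {m : ℤ} (hf : BigO f m) (hg : BigO g m) :
    BigO (f + g) m := fun i hi => by simp [hf i hi, hg i hi]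
lemma BigO.sub {f g : LaurentSeries K} {m : ℤ} (hf : BigO f m) (hg : BigO g m) :
    BigO (f - g) m := fun i hi => by simp [hf i hi, hg i hi]
lemma BigO.neg {f : LaurentSeries K} {m : ℤ} (hf : BigO f m) :
    BigO (-f) m := fun i hi => by simp [hf i hi]
lemma Ld.add {f g : LaurentSeries K} {m : ℤ} {c d : K} (hf : Ld f m c) (hg : Ld g m d) :
    Ld (f + g) m (c + d) := ⟨hf.1.add hg.1, by simp [hf.2, hg.2]⟩
lemma Ld.sub {f g : LaurentSeries K} {m : ℤ} {c d : K} (hf : Ld f m c) (hg : Ld g m d) :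
    Ld (f - g) m (c - d) := ⟨hf.1.sub hg.1, by simp [hf.2, hg.2]⟩
lemma Ld.neg {f : LaurentSeries K} {m : ℤ} {c : K} (hf : Ld f m c) :
    Ld (-f) m (-c) := ⟨hf.1.neg, by simp [hf.2]⟩

lemma Ld_C (c : K) : Ld (HahnSeries.C c : LaurentSeries K) 0 c := by
  refine ⟨fun i hi => ?_, by simp⟩
  simp [HahnSeries.C_apply, HahnSeries.coeff_single_of_ne hi.ne]

lemma Ld_one : Ld (1 : LaurentSeries K) 0 1 := by
  have := Ld_C (1 : K)
  simpa using this

/-- the variable -/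
def tau : LaurentSeries K := HahnSeries.single (1 : ℤ) 1

lemma Ld_tau : Ld (tau : LaurentSeries K) 1 1 := by
  refine ⟨fun i hi => ?_, by simp [tau]⟩
  simp [tau, HahnSeries.coeff_single_of_ne hi.ne]

lemma Ld.ne_zero {f : LaurentSeries K} {m : ℤ} {c : K} (h : Ld f m c) (hc : c ≠ 0) : f ≠ 0 := by
  rintro rfl
  exact hc (by simpa using h.2.symm)

lemma Ld.div {v f : LaurentSeries K} {a m : ℤ} {c d : K} (hv : Ld v a c) (hc : c ≠ 0)
    (h : Ld (v * f) (a + m) d) : Ld f m (d / c) := by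
  have hO : BigO f m := by
    by_contra hn
    have hf : f ≠ 0 := by
      rintro rfl; exact hn (fun i _ => by simp)
    have h1 : Ld f f.order (f.coeff f.order) :=
      ⟨fun i hi => HahnSeries.coeff_eq_zero_of_lt_order hi, rfl⟩
    have h2 := hv.mul h1
    have h3 : f.order < m := by
      by_contra h3
      exact hn (h1.1.mono (by omega))
    have h4 := h.1 (a + f.order) (by omega)
    rw [h2.2] at h4
    rcases mul_eq_zero.1 h4 with h5 | h5
    · exact hc h5
    · exact hf (HahnSeries.coeff_order_eq_zero.1 h5)
  refine ⟨hO, ?_⟩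
  have := (hv.mul hO.ld).uniq h
  rw [← this]; field_simp

lemma BigO.div {v f : LaurentSeries K} {a m : ℤ} {c : K} (hv : Ld v a c) (hc : c ≠ 0)
    (h : BigO (v * f) (a + m)) : BigO f m := (Ld.div hv hc h.ld).1

/-- `t d/dt` -/
def thf (f : LaurentSeries K) : LaurentSeries K where
  coeff m := (m : K) * f.coeff m
  isPWO_support' := f.isPWO_support.mono (fun m hm => by
    simp only [Function.mem_support] at hm
    exact fun h => hm (by rw [h, mul_zero]))

lemma thf_coeff (f : LaurentSeries K) (m : ℤ) : (thf f).coeff m = (m : K) * f.coeff m := rfl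

lemma thf_supp (f : LaurentSeries K) : (thf f).support ⊆ f.support := fun m hm => by
  simp only [HahnSeries.mem_support, thf_coeff] at hm ⊢
  exact fun h => hm (by rw [h, mul_zero])

lemma thf_mul (f g : LaurentSeries K) : thf (f * g) = f * thf g + g * thf f := by
  ext m
  rw [mul_comm g (thf f), HahnSeries.coeff_add, thf_coeff,
    HahnSeries.coeff_mul_left' f.isPWO_support (thf_supp f),
    HahnSeries.coeff_mul_right' g.isPWO_support (thf_supp g), HahnSeries.coeff_mul,
    Finset.mul_sum, ← Finset.sum_add_distrib]
  refine Finset.sum_congr rfl fun ij hij => ?_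
  simp at hij
  rw [thf_coeff, thf_coeff, ← hij.2.2]
  push_cast
  ring

lemma thf_add (f g : LaurentSeries K) : thf (f + g) = thf f + thf g := by
  ext m; simp [thf_coeff, mul_add]

/-- derivations of a commutative ring -/
abbrev DerZ (A : Type*) [CommRing A] := Derivation ℤ A A

/-- derivations from additive maps -/
def mkDer {A : Type*} [CommRing A] (f : A → A) (h1 : ∀ a b, f (a + b) = f a + f b)
    (h2 : ∀ a b, f (a * b) = a * f b + b * f a) : DerZ A :=
  Derivation.mk' (AddMonoidHom.mk' f h1).toIntLinearMap (fun a b => by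
    simp [h2])

/-- derivation `t d/dt` -/
def th : DerZ (LaurentSeries K) := mkDer thf thf_add thf_mul

lemma th_coeff (f : LaurentSeries K) (m : ℤ) : (th f).coeff m = (m : K) * f.coeff m := rfl

lemma Ld.th {f : LaurentSeries K} {m : ℤ} {c : K} (h : Ld f m c) :
    Ld (SingConf.th f) m (m * c) :=
  ⟨fun i hi => by rw [th_coeff, h.1 i hi, mul_zero], by rw [th_coeff, h.2]⟩

lemma tau_mul_coeff (f : LaurentSeries K) (m : ℤ) : (tau * f).coeff m = f.coeff (m - 1) := by
  rw [tau, HahnSeries.coeff_single_mul, one_mul]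

/-- ODE form -/
def OdeX (x : ℤ → LaurentSeries K) : Prop :=
  ∀ k, th (x k) = tau * ((1 - x k * x k) * (x (k + 1) - x (k - 1)))

lemma IsSolSD.ode {x : ℤ → LaurentSeries K} (h : IsSolSD x) : OdeX x := by
  intro k
  ext m
  rw [th_coeff, tau_mul_coeff, ← h k (m - 1)]
  simp

lemma th_C (c : K) : th (HahnSeries.C c : LaurentSeries K) = 0 := by
  ext m
  rw [th_coeff]
  by_cases hm : m = 0
  · simp [hm]
  · simp [HahnSeries.C_apply, HahnSeries.coeff_single_of_ne hm]

lemma th_tau : th (tau : LaurentSeries K) = tau := by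
  ext m
  rw [th_coeff]
  by_cases hm : m = 1
  · simp [hm]
  · simp [tau, HahnSeries.coeff_single_of_ne hm]

/-- regular series -/
def regS : Subring (LaurentSeries K) where
  carrier := {f | BigO f 0}
  mul_mem' := fun {a b} ha hb => by simpa using BigO.mul ha hb
  one_mem' := Ld_one.1
  add_mem' := fun ha hb => BigO.add ha hb
  zero_mem' := fun i _ => by simp
  neg_mem' := fun ha => BigO.neg ha

lemma mem_regS (f : LaurentSeries K) : f ∈ regS ↔ BigO f 0 := Iff.rfl

/-- pairs of regular series that agree up to order `m` -/
def pairS (m : ℤ) : Subring (LaurentSeries K × LaurentSeries K) where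
  carrier := {f | BigO f.1 0 ∧ BigO f.2 0 ∧ BigO (f.2 - f.1) m}
  mul_mem' := fun {a b} ha hb => by
    refine ⟨by simpa using BigO.mul ha.1 hb.1, by simpa using BigO.mul ha.2.1 hb.2.1, ?_⟩
    have : (a * b).2 - (a * b).1 = (a.2 - a.1) * b.2 + a.1 * (b.2 - b.1) := by
      simp; ring
    rw [this]
    refine BigO.add ?_ ?_
    · simpa using BigO.mul ha.2.2 hb.2.1
    · simpa using BigO.mul ha.1 hb.2.2
  one_mem' := ⟨Ld_one.1, Ld_one.1, fun i _ => by simp⟩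
  add_mem' := fun {a b} ha hb => ⟨BigO.add ha.1 hb.1, BigO.add ha.2.1 hb.2.1, by
    have : (a + b).2 - (a + b).1 = (a.2 - a.1) + (b.2 - b.1) := by simp; ring
    rw [this]
    exact ha.2.2.add hb.2.2⟩
  zero_mem' := ⟨fun i _ => by simp, fun i _ => by simp, fun i _ => by simp⟩
  neg_mem' := fun {a} ha => ⟨BigO.neg ha.1, BigO.neg ha.2.1, by
    have : (-a).2 - (-a).1 = -(a.2 - a.1) := by simp; ring
    rw [this]; exact ha.2.2.neg⟩

lemma mem_pairS (m : ℤ) (f : LaurentSeries K × LaurentSeries K) :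
    f ∈ pairS m ↔ BigO f.1 0 ∧ BigO f.2 0 ∧ BigO (f.2 - f.1) m := Iff.rfl

end Laurent
end SingConf

namespace SingConf

set_option linter.unusedSectionVars false
set_option linter.unusedVariables false

section Core
variable {K : Type*} [Field K] [CharZero K]

/-- centered data of a solution -/
structure Dat (X : ℤ → LaurentSeries K) (ε p q : K) : Prop where
  ode : OdeX X
  reg : ∀ k, k ≠ 0 → BigO (X k) 0
  l0 : Ld (X 0) (-1) (-ε / 2)
  l1 : (X 1).coeff 0 = -ε
  m1 : (X (-1)).coeff 0 = ε
  c1 : (X 1).coeff 1 = 4 * ε * p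
  d1 : (X (-1)).coeff 1 = 4 * ε * q
  he : ε * ε = 1
  hb : ∀ k, (2 ≤ k ∨ k ≤ -2) → 1 - (X k).coeff 0 * (X k).coeff 0 ≠ 0

/-- linearised ODE -/
def OdeG (X g : ℤ → LaurentSeries K) : Prop :=
  ∀ k, th (g k) = tau * ((1 - X k * X k) * (g (k + 1) - g (k - 1)))

variable {X : ℤ → LaurentSeries K} {ε p q : K}

lemma Ld.sub_C {f : LaurentSeries K} {c d : K} (h : BigO f 0) (hc : f.coeff 0 = c)
    (hd : f.coeff 1 = d) : Ld (f - HahnSeries.C c) 1 d := by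
  have h1 : Ld (f - HahnSeries.C c) 0 0 := by
    have := h.ld.sub (Ld_C c)
    rw [hc, sub_self] at this
    exact this
  refine ⟨h1.bigO_succ, ?_⟩
  simp [HahnSeries.C_apply, hd, HahnSeries.coeff_single_of_ne]

lemma Dat.v0 (h : Dat X ε p q) : Ld (1 - X 0 * X 0) (-2) (-1 / 4) := by
  have h1 := h.l0.mul h.l0
  have h2 := ((Ld_one (K := K)).1.ld0 (show (-2 : ℤ) < 0 by norm_num)).sub
    (h1.cast (by norm_num) rfl)
  refine h2.cast rfl ?_
  have := h.he
  linear_combination (-1 / 4) * this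

lemma Dat.vk (h : Dat X ε p q) (k : ℤ) (hk : k ≠ 0) :
    Ld (1 - X k * X k) 0 (1 - (X k).coeff 0 * (X k).coeff 0) := by
  have h1 := (h.reg k hk).ld
  exact Ld_one.sub ((h1.mul h1).cast (by norm_num) rfl)

lemma Ld_v_aux {f : LaurentSeries K} {c d : K} (h : BigO f 0) (hc : f.coeff 0 = c)
    (hd : f.coeff 1 = d) (he : c * c = 1) : Ld (1 - f * f) 1 (-2 * c * d) := by
  have h1 := Ld.sub_C h hc hd
  set Y := f - HahnSeries.C c with hY
  have e : 1 - f * f = HahnSeries.C (-2 * c) * Y - Y * Y := by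
    have e1 : (HahnSeries.C c * HahnSeries.C c : LaurentSeries K) = 1 := by
      rw [← map_mul, he, map_one]
    have e2 : (HahnSeries.C (-2 * c) : LaurentSeries K) = -2 * HahnSeries.C c := by
      rw [show -2 * c = -(c + c) by ring, map_neg, map_add]; ring
    rw [e2, hY]
    linear_combination -e1
  rw [e]
  have h2 := ((Ld_C (-2 * c)).mul h1).cast (zero_add _) rfl
  have h3 := (h1.1.mul h1.1).ld0 (show (1 : ℤ) < 1 + 1 by norm_num)
  exact (h2.sub h3).cast rfl (by ring)

lemma Dat.v1 (h : Dat X ε p q) : Ld (1 - X 1 * X 1) 1 (8 * p) :=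
  (Ld_v_aux (h.reg 1 (by norm_num)) h.l1 h.c1 (by linear_combination h.he)).cast rfl
    (by linear_combination (8 * p) * h.he)

lemma Dat.vm1 (h : Dat X ε p q) : Ld (1 - X (-1) * X (-1)) 1 (-8 * q) :=
  (Ld_v_aux (h.reg (-1) (by norm_num)) h.m1 h.d1 (by linear_combination h.he)).cast rfl
    (by linear_combination (-8 * q) * h.he)

lemma th_reg {f : LaurentSeries K} (h : BigO f 0) : BigO (th f) 1 := by
  have := h.ld.th
  simp only [Int.cast_zero, zero_mul] at this
  exact this.bigO_succ

lemma reg_neg (h : Dat X ε p q) {g : ℤ → LaurentSeries K} (hg : OdeG X g) (k0 : ℤ)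
    (h0 : ∀ k ≤ k0, BigO (g k) 0) : ∀ k ≤ -1, BigO (g k) 0 := by
  have key : ∀ j : ℕ, ∀ k ≤ k0 + j, k ≤ -1 → BigO (g k) 0 := by
    intro j
    induction j with
    | zero => intro k hk _; exact h0 k (by simpa using hk)
    | succ j ih =>
      intro k hk hk1
      have e := hg (k - 1)
      have g1 := ih (k - 1) (by push_cast at hk; omega) (by omega)
      have g2 := ih (k - 1 - 1) (by push_cast at hk; omega) (by omega)
      have hv := h.vk (k - 1) (by omega)
      have e2 : (tau * (1 - X (k - 1) * X (k - 1))) * g k = th (g (k - 1)) +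
          (tau * (1 - X (k - 1) * X (k - 1))) * g (k - 1 - 1) := by
        rw [e, sub_add_cancel]; ring
      have hw := (Ld_tau.mul hv).cast (add_zero _) rfl
      refine BigO.div hw (by simpa using h.hb (k - 1) (by omega)) ?_
      rw [e2]
      exact (th_reg g1).add (hw.1.mul g2)
  intro k hk
  exact key (k - k0).toNat k (by omega) hk

lemma g_zero (h : Dat X ε p q) {g : ℤ → LaurentSeries K} (hg : OdeG X g)
    (h1 : BigO (g 1) 0) (h2 : BigO (g (-1)) 0) :
    Ld (g 0) (-1) (((g 1).coeff 0 - (g (-1)).coeff 0) / 4) := by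
  have e := hg 0
  have h3 := (Ld_tau.mul (h.v0.mul (h1.ld.sub h2.ld))).cast
    (show (1 : ℤ) + (-2 + 0) = -1 by norm_num) rfl
  rw [zero_add, zero_sub] at e
  rw [← e] at h3
  have hO : BigO (g 0) (-1) := by
    intro i hi
    have := h3.1 i hi
    rw [th_coeff] at this
    rcases mul_eq_zero.1 this with h4 | h4
    · exfalso
      have : i = 0 := by exact_mod_cast h4
      omega
    · exact h4
  refine ⟨hO, ?_⟩
  have := h3.uniq hO.ld.th
  push_cast at this
  linear_combination this

/-! ### comparison of two solutions -/

section Cmp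
variable {Z : ℤ → LaurentSeries K}

lemma cmp_eq (hX : OdeX X) (hZ : OdeX Z) (k : ℤ) :
    th (Z k - X k) = tau * ((1 - Z k * Z k) * ((Z (k + 1) - X (k + 1)) - (Z (k - 1) - X (k - 1))))
      - tau * ((Z k + X k) * ((Z k - X k) * (X (k + 1) - X (k - 1)))) := by
  rw [map_sub, hX k, hZ k]; ring

lemma cmp_gen (hX : Dat X ε p q) (hZ : Dat Z ε p q) (k : ℤ) (hk : 2 ≤ k ∨ k ≤ -2) (m : ℤ)
    (h0 : BigO (Z k - X k) m) (h1 : BigO (Z (k + 1) - X (k + 1)) (m - 1))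
    (h2 : BigO (Z (k - 1) - X (k - 1)) (m - 1)) :
    (m : K) * (Z k - X k).coeff m = (1 - (Z k).coeff 0 * (Z k).coeff 0) *
      ((Z (k + 1) - X (k + 1)).coeff (m - 1) - (Z (k - 1) - X (k - 1)).coeff (m - 1)) := by
  have e := cmp_eq hX.ode hZ.ode k
  have a1 := (Ld_tau.mul ((hZ.vk k (by omega)).mul (h1.ld.sub h2.ld))).cast
    (show (1 : ℤ) + (0 + (m - 1)) = m by ring) rfl
  have a2 := (Ld_tau.1.mul (((hZ.reg k (by omega)).add (hX.reg k (by omega))).mul (h0.mul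
    ((hX.reg (k + 1) (by omega)).sub (hX.reg (k - 1) (by omega)))))).ld0
    (show m < (1 : ℤ) + (0 + (m + 0)) by omega)
  have a3 := a1.sub a2
  rw [← e] at a3
  rw [h0.ld.th.uniq a3]; ring

lemma cmp_one (hX : Dat X ε p q) (hZ : Dat Z ε p q) (m : ℤ)
    (h0 : BigO (Z 1 - X 1) m) (h1 : BigO (Z 2 - X 2) (m - 2)) (h2 : BigO (Z 0 - X 0) (m - 1)) :
    ((m : K) - 1) * (Z 1 - X 1).coeff m = 8 * p * (Z 2 - X 2).coeff (m - 2) := by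
  have e := cmp_eq hX.ode hZ.ode 1
  rw [show (1 : ℤ) + 1 = 2 by norm_num, show (1 : ℤ) - 1 = 0 by norm_num] at e
  have a1 := (Ld_tau.mul ((hZ.v1).mul (h1.ld.sub (h2.ld0 (show m - 2 < m - 1 by omega))))).cast
    (show (1 : ℤ) + (1 + (m - 2)) = m by ring) rfl
  have s := (hZ.reg 1 (by norm_num)).ld.add (hX.reg 1 (by norm_num)).ld
  have a2 := (Ld_tau.mul (s.mul (h0.ld.mul
    (((hX.reg 2 (by norm_num)).ld0 (show (-1 : ℤ) < 0 by norm_num)).sub hX.l0)))).cast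
    (show (1 : ℤ) + (0 + (m + -1)) = m by ring) rfl
  have a3 := a1.sub a2
  rw [← e] at a3
  have := h0.ld.th.uniq a3
  rw [hZ.l1, hX.l1] at this
  linear_combination this + (Z 1 - X 1).coeff m * hX.he

lemma cmp_neg (hX : Dat X ε p q) (hZ : Dat Z ε p q) (m : ℤ)
    (h0 : BigO (Z (-1) - X (-1)) m) (h1 : BigO (Z 0 - X 0) (m - 2))
    (h2 : BigO (Z (-2) - X (-2)) (m - 1)) :
    ((m : K) - 1) * (Z (-1) - X (-1)).coeff m = -8 * q * (Z 0 - X 0).coeff (m - 2) := by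
  have e := cmp_eq hX.ode hZ.ode (-1)
  rw [show (-1 : ℤ) + 1 = 0 by norm_num, show (-1 : ℤ) - 1 = -2 by norm_num] at e
  have a1 := (Ld_tau.mul ((hZ.vm1).mul (h1.ld.sub (h2.ld0 (show m - 2 < m - 1 by omega))))).cast
    (show (1 : ℤ) + (1 + (m - 2)) = m by ring) rfl
  have s := (hZ.reg (-1) (by norm_num)).ld.add (hX.reg (-1) (by norm_num)).ld
  have a2 := (Ld_tau.mul (s.mul (h0.ld.mul
    (hX.l0.sub ((hX.reg (-2) (by norm_num)).ld0 (show (-1 : ℤ) < 0 by norm_num)))))).cast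
    (show (1 : ℤ) + (0 + (m + -1)) = m by ring) rfl
  have a3 := a1.sub a2
  rw [← e] at a3
  have := h0.ld.th.uniq a3
  rw [hZ.m1, hX.m1] at this
  linear_combination this + (Z (-1) - X (-1)).coeff m * hX.he

lemma cmp_zero (hX : Dat X ε p q) (hZ : Dat Z ε p q) (m : ℤ)
    (h0 : BigO (Z 0 - X 0) m) (h1 : BigO (Z 1 - X 1) (m + 1))
    (h2 : BigO (Z (-1) - X (-1)) (m + 1)) :
    ((m : K) + 2) * (Z 0 - X 0).coeff m =
      -1 / 4 * ((Z 1 - X 1).coeff (m + 1) - (Z (-1) - X (-1)).coeff (m + 1)) := by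
  have e := cmp_eq hX.ode hZ.ode 0
  rw [zero_add, zero_sub] at e
  have a1 := (Ld_tau.mul ((hZ.v0).mul (h1.ld.sub h2.ld))).cast
    (show (1 : ℤ) + (-2 + (m + 1)) = m by ring) rfl
  have s := hZ.l0.add hX.l0
  have a2 := (Ld_tau.mul (s.mul (h0.ld.mul
    ((hX.reg 1 (by norm_num)).ld.sub (hX.reg (-1) (by norm_num)).ld)))).cast
    (show (1 : ℤ) + (-1 + (m + 0)) = m by ring) rfl
  have a3 := a1.sub a2
  rw [← e] at a3
  have := h0.ld.th.uniq a3
  rw [hX.l1, hX.m1] at this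
  linear_combination this - 2 * (Z 0 - X 0).coeff m * hX.he

/-- orders -/
def ek (M k : ℤ) : ℤ := if k = 1 then M else if k = 0 then M - 1 else M - k

lemma cast_ne (m : ℤ) (h : m ≠ 0) : (m : K) ≠ 0 := by exact_mod_cast h

lemma cmp_ord (hX : Dat X ε p q) (hZ : Dat Z ε p q) (M : ℤ) (hM : 2 ≤ M)
    (hb : ∀ k, (2 ≤ k ∨ k ≤ -2) → k < M → (Z k).coeff 0 = (X k).coeff 0) (k : ℤ) :
    BigO (Z k - X k) (ek M k) := by
  have key : ∀ m : ℕ, (∀ k, k ≠ 0 → BigO (Z k - X k) (min m (ek M k))) ∧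
      BigO (Z 0 - X 0) (min (m - 1) (ek M 0)) := by
    intro m
    induction m with
    | zero =>
      refine ⟨fun k hk => ((hZ.reg k hk).sub (hX.reg k hk)).mono (by simp), ?_⟩
      exact (hZ.l0.1.sub hX.l0.1).mono (by simp)
    | succ m ih =>
      obtain ⟨ih, ih0⟩ := ih
      have A : ∀ k, k ≠ 0 → BigO (Z k - X k) (min ((m + 1 : ℕ) : ℤ) (ek M k)) := by
        intro k hk
        by_cases hek : ek M k ≤ m
        · exact (ih k hk).mono (by omega)
        push Not at hek
        have hkm : BigO (Z k - X k) m := (ih k hk).mono (by omega)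
        refine BigO.mono (m := (m : ℤ) + 1) ?_ (by push_cast; omega)
        refine Ld.bigO_succ (hkm.ld.cast rfl ?_)
        by_cases hk1 : k = 1
        · subst hk1
          have : ek M 1 = M := by simp [ek]
          rw [this] at hek
          rcases Nat.lt_or_ge m 2 with hm | hm
          · interval_cases m
            · simp [hZ.l1, hX.l1]
            · simp [hZ.c1, hX.c1]
          have b2 := ih 2 (by norm_num)
          have : ek M 2 = M - 2 := by simp [ek]
          rw [this] at b2
          have : ek M 0 = M - 1 := by simp [ek]
          rw [this] at ih0
          have := cmp_one hX hZ m hkm (b2.mono (by omega)) (ih0.mono (by omega))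
          rw [b2 ((m : ℤ) - 2) (by omega), mul_zero] at this
          refine (mul_eq_zero.1 this).resolve_left ?_
          have := cast_ne (K := K) ((m : ℤ) - 1) (by omega)
          exact_mod_cast this
        by_cases hk2 : k = -1
        · subst hk2
          have : ek M (-1) = M + 1 := by simp [ek]
          rw [this] at hek
          rcases Nat.lt_or_ge m 2 with hm | hm
          · interval_cases m
            · simp [hZ.m1, hX.m1]
            · simp [hZ.d1, hX.d1]
          have b2 := ih (-2) (by norm_num)
          have : ek M (-2) = M + 2 := by simp [ek]
          rw [this] at b2
          have : ek M 0 = M - 1 := by simp [ek]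
          rw [this] at ih0
          have := cmp_neg hX hZ m hkm (ih0.mono (by omega)) (b2.mono (by omega))
          rw [ih0 ((m : ℤ) - 2) (by omega), mul_zero] at this
          refine (mul_eq_zero.1 this).resolve_left ?_
          have := cast_ne (K := K) ((m : ℤ) - 1) (by omega)
          exact_mod_cast this
        have hk3 : 2 ≤ k ∨ k ≤ -2 := by omega
        have hek' : ek M k = M - k := by simp [ek, hk, hk1]
        have n1 : M - k - 1 ≤ ek M (k + 1) := by unfold ek; split_ifs <;> omega
        have n2 : M - k - 1 ≤ ek M (k - 1) := by unfold ek; split_ifs <;> omega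
        rcases Nat.eq_zero_or_pos m with hm | hm
        · subst hm
          simp [hb k hk3 (by rw [hek'] at hek; push_cast at hek; omega)]
        have b1 := ih (k + 1) (by omega)
        have b2 := ih (k - 1) (by omega)
        have := cmp_gen hX hZ k hk3 m hkm (b1.mono (by omega)) (b2.mono (by omega))
        rw [b1 ((m : ℤ) - 1) (by omega), b2 ((m : ℤ) - 1) (by omega), sub_self, mul_zero] at this
        refine (mul_eq_zero.1 this).resolve_left ?_
        exact cast_ne (K := K) (m : ℤ) (by omega)
      refine ⟨A, ?_⟩
      have e0 : ek M 0 = M - 1 := by simp [ek]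
      have e1 : ek M 1 = M := by simp [ek]
      have e2 : ek M (-1) = M + 1 := by simp [ek]
      by_cases hek : ek M 0 ≤ (m : ℤ) - 1
      · exact ih0.mono (by omega)
      push Not at hek
      have hkm : BigO (Z 0 - X 0) ((m : ℤ) - 1) := ih0.mono (by omega)
      refine BigO.mono (m := (m : ℤ) - 1 + 1) ?_ (by push_cast; omega)
      refine Ld.bigO_succ (hkm.ld.cast rfl ?_)
      have b1 := A 1 (by norm_num)
      have b2 := A (-1) (by norm_num)
      have := cmp_zero hX hZ _ hkm (b1.mono (by push_cast; omega)) (b2.mono (by push_cast; omega))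
      rw [b1 ((m : ℤ) - 1 + 1) (by push_cast; omega),
        b2 ((m : ℤ) - 1 + 1) (by push_cast; omega), sub_self, mul_zero] at this
      refine (mul_eq_zero.1 this).resolve_left ?_
      have := cast_ne (K := K) ((m : ℤ) + 1) (by omega)
      push_cast at this ⊢
      intro h; apply this; linear_combination h
  by_cases hk : k = 0
  · subst hk
    exact (key (ek M 0 + 1).toNat).2.mono (by omega)
  · exact ((key (ek M k).toNat).1 k hk).mono (by omega)

end Cmp
end Core
end SingConf

namespace SingConf

set_option linter.unusedSectionVars false
set_option linter.unusedVariables false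
set_option linter.unusedTactic false

section Core2
variable {K : Type*} [Field K] [CharZero K]
variable {X Z : ℤ → LaurentSeries K} {ε p q : K}

/-- product of the leading values of `1 - x²` -/
def vprod (X : ℤ → LaurentSeries K) (k : ℤ) (j : ℕ) : K :=
  ∏ i ∈ Finset.range j, (1 - (X (k + i)).coeff 0 * (X (k + i)).coeff 0)

lemma vprod_ne (hX : Dat X ε p q) (k : ℤ) (j : ℕ) (h : 2 ≤ k ∨ k + j ≤ -1) :
    vprod X k j ≠ 0 := by
  refine Finset.prod_ne_zero_iff.2 fun i hi => hX.hb _ ?_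
  have := Finset.mem_range.1 hi
  omega

lemma lead_hi (hX : Dat X ε p q) (hZ : Dat Z ε p q) (M : ℤ) (hM : 2 ≤ M)
    (hb : ∀ k, (2 ≤ k ∨ k ≤ -2) → k < M → (Z k).coeff 0 = (X k).coeff 0) (j : ℕ)
    (hj : (j : ℤ) ≤ M - 2) :
    (j.factorial : K) * (Z (M - j) - X (M - j)).coeff j =
      vprod Z (M - j) j * (Z M - X M).coeff 0 := by
  induction j with
  | zero => simp [vprod]
  | succ j ih =>
    push_cast at hj
    have ih := ih (by omega)
    have o := cmp_ord hX hZ M hM hb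
    have o1 := o (M - (j + 1 : ℕ))
    have o2 := o (M - (j + 1 : ℕ) + 1)
    have o3 := o (M - (j + 1 : ℕ) - 1)
    rw [show M - (j + 1 : ℕ) + 1 = M - j by push_cast; ring] at o2
    rw [show ek M (M - (j + 1 : ℕ)) = j + 1 by
      unfold ek; push_cast; split_ifs <;> omega] at o1
    rw [show ek M (M - j) = j by
      unfold ek; push_cast; split_ifs <;> omega] at o2
    have o3' : BigO (Z (M - (j + 1 : ℕ) - 1) - X (M - (j + 1 : ℕ) - 1)) ((j : ℤ) + 1) := by
      refine o3.mono ?_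
      unfold ek; push_cast; split_ifs <;> omega
    have c := cmp_gen hX hZ (M - (j + 1 : ℕ)) (by push_cast; omega) (j + 1) o1
      (by rw [show M - (j + 1 : ℕ) + 1 = M - j by push_cast; ring]
          exact o2.mono (by omega)) (o3'.mono (by omega))
    rw [o3' _ (by omega), sub_zero, show M - (j + 1 : ℕ) + 1 = M - j by push_cast; ring,
      show (j : ℤ) + 1 - 1 = j by ring] at c
    have hv : vprod Z (M - (j + 1 : ℕ)) (j + 1) =
        (1 - (Z (M - (j + 1 : ℕ))).coeff 0 * (Z (M - (j + 1 : ℕ))).coeff 0) *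
          vprod Z (M - j) j := by
      unfold vprod
      rw [Finset.prod_range_succ', mul_comm]
      congr 1
      · simp
      · refine Finset.prod_congr rfl fun i _ => ?_
        rw [show M - ((j + 1 : ℕ) : ℤ) + ((i + 1 : ℕ) : ℤ) = M - j + i by push_cast; ring]
    rw [hv, Nat.factorial_succ]
    push_cast at c ⊢
    linear_combination (j.factorial : K) * c +
      (1 - (Z (M - ((j : ℤ) + 1))).coeff 0 * (Z (M - ((j : ℤ) + 1))).coeff 0) * ih

/-- the constant relating the leading coefficient at site `0` to the variation -/
lemma lead_zero (hX : Dat X ε p q) (hZ : Dat Z ε p q) (N : ℕ) (hN : 1 ≤ N)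
    (hb : ∀ k : ℤ, (2 ≤ k ∨ k ≤ -2) → k < N + 1 → (Z k).coeff 0 = (X k).coeff 0) :
    ((N + 2 : ℚ) : K) * (N : ℚ) * ((N - 1).factorial : ℚ) * (Z 0 - X 0).coeff N =
      -2 * p * vprod Z 2 (N - 1) * (Z (N + 1) - X (N + 1)).coeff 0 := by
  have hM : (2 : ℤ) ≤ N + 1 := by omega
  have o := cmp_ord hX hZ (N + 1) hM hb
  have o0 := o 0
  have o1 := o 1
  have o2 := o 2
  have om := o (-1)
  simp only [ek] at o0 o1 o2 om
  norm_num at o0 o1 o2 om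
  have c0 := cmp_zero hX hZ N o0 o1 (om.mono (by omega))
  rw [om (N + 1) (by omega), sub_zero] at c0
  have c1 := cmp_one hX hZ (N + 1) o1 (o2.mono (by omega)) (o0.mono (by omega))
  have c2 := lead_hi hX hZ (N + 1) hM hb (N - 1) (by omega)
  rw [show (N : ℤ) + 1 - (N - 1 : ℕ) = 2 by omega] at c2
  rw [show ((N : ℤ) + 1 - 2) = (N - 1 : ℕ) by omega] at c1
  push_cast at *
  linear_combination ((N : K) * ((N - 1).factorial : K)) * c0 -
    (1 / 4) * ((N - 1).factorial : K) * c1 - 2 * p * c2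

lemma lead_neg (hX : Dat X ε p q) (hZ : Dat Z ε p q) (N : ℕ) (hN : 1 ≤ N)
    (hb : ∀ k : ℤ, (2 ≤ k ∨ k ≤ -2) → k < N + 1 → (Z k).coeff 0 = (X k).coeff 0) :
    ((N : K) + 1) * (Z (-1) - X (-1)).coeff (N + 2) = -8 * q * (Z 0 - X 0).coeff N := by
  have hM : (2 : ℤ) ≤ N + 1 := by omega
  have o := cmp_ord hX hZ (N + 1) hM hb
  have o0 := o 0
  have o2 := o (-2)
  have om := o (-1)
  simp only [ek] at o0 o2 om
  norm_num at o0 o2 om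
  have c := cmp_neg hX hZ (N + 2) (om.mono (by omega)) (o0.mono (by omega)) (o2.mono (by omega))
  push_cast at c
  rw [show (N : ℤ) + 2 - 2 = N by ring] at c
  linear_combination c

/-- descending factorial like constant -/
def rho (N : ℕ) (j : ℕ) : ℚ := ∏ i ∈ Finset.range j, ((N : ℚ) + 2 - i)

lemma rho_ne (N j : ℕ) (h : j ≤ N) : rho N j ≠ 0 := by
  refine Finset.prod_ne_zero_iff.2 fun i hi => ?_
  have := Finset.mem_range.1 hi
  have : (i : ℚ) < N := by exact_mod_cast (by omega : i < N)
  intro h; linarith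

lemma eta_eq {g h : ℤ → LaurentSeries K} (hg : OdeG X g) (hh : OdeG Z h) (k : ℤ) :
    (tau * (1 - Z k * Z k)) * (h (k + 1) - g (k + 1)) = th (h k - g k)
      + (tau * (1 - Z k * Z k)) * (h (k - 1) - g (k - 1))
      + tau * ((Z k + X k) * ((Z k - X k) * (g (k + 1) - g (k - 1)))) := by
  rw [map_sub, hg k, hh k]; ring

lemma eta_chain (hX : Dat X ε p q) (hZ : Dat Z ε p q) (N : ℕ) (hN : 1 ≤ N)
    (hb : ∀ k : ℤ, (2 ≤ k ∨ k ≤ -2) → k < N + 1 → (Z k).coeff 0 = (X k).coeff 0)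
    {g h : ℤ → LaurentSeries K} (hg : OdeG X g) (hh : OdeG Z h)
    (rg : ∀ k ≤ -1, BigO (g k) 0) (c : K)
    (i1 : BigO (h (-2 - N) - g (-2 - N)) (N + 3))
    (i2 : Ld (h (-1 - N) - g (-1 - N)) (N + 2) c) (j : ℕ) (hj : j ≤ N) :
    BigO (h (-2 - N + j) - g (-2 - N + j)) (N + 3 - j) ∧
    ∃ d, Ld (h (-1 - N + j) - g (-1 - N + j)) (N + 2 - j) d ∧
      d * vprod Z (-1 - N) j = (rho N j : K) * c := by
  induction j with
  | zero =>
    refine ⟨by simpa using i1, c, by simpa using i2, by simp [vprod, rho]⟩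
  | succ j ih =>
    obtain ⟨h1, d, h2, h3⟩ := ih (by omega)
    have o := cmp_ord hX hZ (N + 1) (by omega) hb (-1 - N + j)
    have hek : ek (N + 1) (-1 - N + j) = 2 * N + 2 - j := by
      unfold ek; split_ifs <;> omega
    rw [hek] at o
    refine ⟨?_, ?_⟩
    · rw [show -2 - (N : ℤ) + (j + 1 : ℕ) = -1 - N + j by push_cast; ring]
      exact h2.1.mono (by push_cast; omega)
    have e := eta_eq hg hh (-1 - N + j)
    rw [show -1 - (N : ℤ) + j - 1 = -2 - N + j by ring] at e
    have hk2 : (-1 - (N : ℤ) + j) ≤ -2 := by omega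
    set k : ℤ := -1 - N + j with hk
    have hw := (Ld_tau.mul (hZ.vk k (by omega))).cast (add_zero _) (one_mul _)
    have a2 := (hw.1.mul h1).ld0 (show (N : ℤ) + 2 - j < 1 + (N + 3 - j) by omega)
    have a3 := (Ld_tau.1.mul (((hZ.reg k (by omega)).add (hX.reg k (by omega))).mul (o.mul
      ((rg (k + 1) (by omega)).sub (rg (-2 - N + j) (by omega)))))).ld0
      (show (N : ℤ) + 2 - j < 1 + (0 + (2 * N + 2 - j + 0)) by omega)
    have a4 := (h2.th.add a2).add a3
    rw [← e] at a4
    have a5 := Ld.div hw (hZ.hb k (by omega)) (m := (N : ℤ) + 1 - j)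
      (a4.cast (by ring) rfl)
    refine ⟨((N + 2 - j : ℤ) : K) * d / (1 - (Z k).coeff 0 * (Z k).coeff 0), ?_, ?_⟩
    · rw [show -1 - (N : ℤ) + (j + 1 : ℕ) = k + 1 by push_cast; omega]
      exact a5.cast (by push_cast; ring) (by ring)
    · have hv : vprod Z (-1 - N) (j + 1) = vprod Z (-1 - N) j *
          (1 - (Z k).coeff 0 * (Z k).coeff 0) := by
        unfold vprod; rw [Finset.prod_range_succ, hk]
      have hr : rho N (j + 1) = rho N j * ((N : ℚ) + 2 - j) := by
        unfold rho; rw [Finset.prod_range_succ]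
      have hne := hZ.hb k (by omega)
      rw [hv, hr]
      generalize 1 - (Z k).coeff 0 * (Z k).coeff 0 = w at hne ⊢
      push_cast
      field_simp
      linear_combination ((N : K) + 2 - j) * h3

/-- the overall constant -/
def kap (N : ℕ) : ℚ := -4 * rho N N / (((N : ℚ) + 1) * ((N + 2) * N * (N - 1).factorial))

lemma kap_ne (N : ℕ) (hN : 1 ≤ N) : kap N ≠ 0 := by
  unfold kap
  have h1 := rho_ne N N le_rfl
  have h2 : (N : ℚ) ≠ 0 := by exact_mod_cast (by omega : N ≠ 0)
  have h3 : ((N - 1).factorial : ℚ) ≠ 0 := by exact_mod_cast Nat.factorial_ne_zero _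
  have h4 : (N : ℚ) + 1 ≠ 0 := by positivity
  have h5 : (N : ℚ) + 2 ≠ 0 := by positivity
  exact div_ne_zero (mul_ne_zero (by norm_num) h1)
    (mul_ne_zero h4 (mul_ne_zero (mul_ne_zero h5 h2) h3))

lemma eta_zero (hX : Dat X ε p q) (hZ : Dat Z ε p q) (hq : q ≠ 0) (N : ℕ) (hN : 1 ≤ N)
    (hb : ∀ k : ℤ, (2 ≤ k ∨ k ≤ -2) → k < N + 1 → (Z k).coeff 0 = (X k).coeff 0)
    {g h : ℤ → LaurentSeries K} (hg : OdeG X g) (hh : OdeG Z h)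
    (rg : ∀ k ≤ -1, BigO (g k) 0) (r0 : BigO (g 0) (-1)) (U : K)
    (i1 : BigO (h (-2 - N) - g (-2 - N)) (N + 3))
    (i2 : Ld (h (-1 - N) - g (-1 - N)) (N + 2)
      (U * vprod Z (-1 - N) N * (Z (-1) - X (-1)).coeff (N + 2))) :
    (h 0 - g 0).coeff 0 = (kap N : K) * U * p * vprod Z 2 (N - 1) *
      (Z (N + 1) - X (N + 1)).coeff 0 := by
  obtain ⟨h1, d, h2, h3⟩ := eta_chain hX hZ N hN hb hg hh rg _ i1 i2 N le_rfl
  rw [show -2 - (N : ℤ) + N = -2 by ring, show (N : ℤ) + 3 - N = 3 by ring] at h1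
  rw [show -1 - (N : ℤ) + N = -1 by ring, show (N : ℤ) + 2 - N = 2 by ring] at h2
  have hvn := vprod_ne hZ (-1 - N) N (by omega)
  have hd : d = (rho N N : K) * U * (Z (-1) - X (-1)).coeff (N + 2) := by
    apply mul_right_cancel₀ hvn
    linear_combination h3
  have o := cmp_ord hX hZ (N + 1) (by omega) hb (-1)
  have hek : ek (N + 1) (-1) = N + 2 := by
    have h1 : ¬ ((-1 : ℤ) = 1) := by norm_num
    have h2 : ¬ ((-1 : ℤ) = 0) := by norm_num
    rw [ek, if_neg h1, if_neg h2]; ring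
  rw [hek] at o
  have e := eta_eq hg hh (-1)
  rw [show (-1 : ℤ) + 1 = 0 by ring, show (-1 : ℤ) - 1 = -2 by ring] at e
  have hw := (Ld_tau.mul hZ.vm1).cast rfl (one_mul _)
  have a2 := (hw.1.mul h1).ld0 (show (2 : ℤ) < 1 + 1 + 3 by omega)
  have a3 := (Ld_tau.1.mul (((hZ.reg (-1) (by omega)).add (hX.reg (-1) (by omega))).mul (o.mul
      (r0.sub ((rg (-2) (by omega)).mono (by omega)))))).ld0
      (show (2 : ℤ) < 1 + (0 + (N + 2 + -1)) by omega)
  have a4 := (h2.th.add a2).add a3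
  rw [← e] at a4
  have h8 : (-8 * q) ≠ 0 := mul_ne_zero (by norm_num) hq
  have a5 := Ld.div hw h8 (m := 0) (a4.cast (by norm_num) rfl)
  rw [a5.2, hd]
  have l0 := lead_zero hX hZ N hN hb
  have l1 := lead_neg hX hZ N hN hb
  have n1 : (N : K) + 1 ≠ 0 := by exact_mod_cast (by omega : N + 1 ≠ 0)
  have n2 : (N : K) + 2 ≠ 0 := by exact_mod_cast (by omega : N + 2 ≠ 0)
  have n3 : (N : K) ≠ 0 := by exact_mod_cast (by omega : N ≠ 0)
  have n4 : ((N - 1).factorial : K) ≠ 0 := by exact_mod_cast Nat.factorial_ne_zero _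
  have l1' : (Z (-1) - X (-1)).coeff (N + 2) = -8 * q * (Z 0 - X 0).coeff N / ((N : K) + 1) := by
    rw [← l1]; field_simp
  have l0' : (Z 0 - X 0).coeff N = -2 * p * vprod Z 2 (N - 1) * (Z (N + 1) - X (N + 1)).coeff 0
      / (((N : K) + 2) * N * (N - 1).factorial) := by
    rw [← l0]; push_cast; field_simp
  rw [l1', l0']
  unfold kap
  push_cast
  field_simp
  ring

end Core2
end SingConf

namespace SingConf

set_option linter.unusedSectionVars false
set_option linter.unusedVariables false
set_option linter.unusedTactic false

section Loc
variable {K : Type*} [Field K] [CharZero K]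

/-- pairs -/
def prs (x z : ℤ → LaurentSeries K) (l : ℤ) : LaurentSeries K × LaurentSeries K := (x l, z l)
/-- diagonal -/
def dgs (u : ℕ → LaurentSeries K) (i : ℕ) : LaurentSeries K × LaurentSeries K := (u i, u i)

lemma dgs_mem (m : ℤ) (u : ℕ → LaurentSeries K) (hu : ∀ i, BigO (u i) 0) (i : ℕ) :
    dgs u i ∈ pairS m := by
  refine ⟨hu i, hu i, fun j _ => by simp [dgs]⟩

lemma gam_fst (N : ℕ) (u : ℕ → LaurentSeries K) (x z : ℤ → LaurentSeries K) (k : ℤ) :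
    (GamSD N (dgs u) (prs x z) k).1 = GamSD N u x k :=
  Gam_map (RingHom.fst _ _) N (dgs u) (prs x z) k
lemma gam_snd (N : ℕ) (u : ℕ → LaurentSeries K) (x z : ℤ → LaurentSeries K) (k : ℤ) :
    (GamSD N (dgs u) (prs x z) k).2 = GamSD N u z k :=
  Gam_map (RingHom.snd _ _) N (dgs u) (prs x z) k
lemma topU_fst (N : ℕ) (x z : ℤ → LaurentSeries K) (k : ℤ) :
    (topU (prs x z) N k).1 = topU x N k := topU_map (RingHom.fst _ _) (prs x z) N k
lemma topU_snd (N : ℕ) (x z : ℤ → LaurentSeries K) (k : ℤ) :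
    (topU (prs x z) N k).2 = topU z N k := topU_map (RingHom.snd _ _) (prs x z) N k
lemma topD_fst (N : ℕ) (x z : ℤ → LaurentSeries K) (k : ℤ) :
    (topD (prs x z) N k).1 = topD x N k := topD_map (RingHom.fst _ _) (prs x z) N k
lemma topD_snd (N : ℕ) (x z : ℤ → LaurentSeries K) (k : ℤ) :
    (topD (prs x z) N k).2 = topD z N k := topD_map (RingHom.snd _ _) (prs x z) N k

variable {u : ℕ → LaurentSeries K} {x z : ℤ → LaurentSeries K} {N : ℕ} {k m : ℤ}

lemma loc (hN : 1 ≤ N) (hu : ∀ i, BigO (u i) 0)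
    (h : ∀ l, k - N ≤ l → l ≤ k + N → BigO (x l) 0 ∧ BigO (z l) 0 ∧ BigO (z l - x l) m) :
    BigO (GamSD N u z k - GamSD N u x k) m := by
  have := Gam_mem (pairS m) N hN (dgs u) (dgs_mem m u hu) (prs x z) k h
  rw [mem_pairS, gam_fst, gam_snd] at this
  exact this.2.2

lemma locU (hN : 1 ≤ N) (hu : ∀ i, BigO (u i) 0)
    (h : ∀ l, k - N ≤ l → l < k + N → BigO (x l) 0 ∧ BigO (z l) 0 ∧ BigO (z l - x l) m) :
    BigO ((GamSD N u z k - u N * topU z N k * z (k + N))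
      - (GamSD N u x k - u N * topU x N k * x (k + N))) m ∧
    BigO (topU z N k - topU x N k) m := by
  have h1 := RestU_mem (pairS m) N hN (dgs u) (dgs_mem m u hu) (prs x z) k h
  have h2 := topU_mem (pairS m) N (prs x z) k h
  rw [mem_pairS] at h1 h2
  simp only [Prod.fst_sub, Prod.snd_sub, Prod.fst_mul, Prod.snd_mul, gam_fst, gam_snd,
    topU_fst, topU_snd] at h1 h2
  exact ⟨h1.2.2, h2.2.2⟩

lemma locD (hN : 1 ≤ N) (hu : ∀ i, BigO (u i) 0)
    (h : ∀ l, k - N < l → l ≤ k + N → BigO (x l) 0 ∧ BigO (z l) 0 ∧ BigO (z l - x l) m) :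
    BigO ((GamSD N u z k - u N * topD z N k * z (k - N))
      - (GamSD N u x k - u N * topD x N k * x (k - N))) m ∧
    BigO (topD z N k - topD x N k) m := by
  have h1 := RestD_mem (pairS m) N hN (dgs u) (dgs_mem m u hu) (prs x z) k h
  have h2 := topD_mem (pairS m) N (prs x z) k h
  rw [mem_pairS] at h1 h2
  simp only [Prod.fst_sub, Prod.snd_sub, Prod.fst_mul, Prod.snd_mul, gam_fst, gam_snd,
    topD_fst, topD_snd] at h1 h2
  exact ⟨h1.2.2, h2.2.2⟩

lemma i2_aux {U Tx Tz fx fz hh gg : LaurentSeries K} {a v d : K}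
    (hR : BigO ((hh - U * Tz * fz) - (gg - U * Tx * fx)) (m + 1)) (hT : BigO (Tz - Tx) (m + 1))
    (hU : Ld U 0 a) (hTz : Ld Tz 0 v) (hf : BigO fx 0) (hd : Ld (fz - fx) m d) :
    Ld (hh - gg) m (a * v * d) := by
  have e : hh - gg = ((hh - U * Tz * fz) - (gg - U * Tx * fx)) + U * ((Tz - Tx) * fx)
    + U * (Tz * (fz - fx)) := by ring
  rw [e]
  have b1 := hR.ld0 (show m < m + 1 by omega)
  have b2 := (hU.1.mul (hT.mul hf)).ld0 (show m < 0 + (m + 1 + 0) by omega)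
  have b3 := (hU.mul (hTz.mul hd)).cast (show 0 + (0 + m) = m by ring) rfl
  exact ((b1.add b2).add b3).cast rfl (by ring)

lemma Ld_prod {ι : Type*} (s : Finset ι) (f : ι → LaurentSeries K) (c : ι → K)
    (h : ∀ i ∈ s, Ld (f i) 0 (c i)) : Ld (∏ i ∈ s, f i) 0 (∏ i ∈ s, c i) := by
  classical
  induction s using Finset.induction_on with
  | empty => simpa using Ld_one
  | insert a s ha ih =>
    rw [Finset.prod_insert ha, Finset.prod_insert ha]
    exact ((h a (by simp)).mul (ih fun i hi => h i (by simp [hi]))).cast (add_zero _) rfl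

/-- parity sign -/
def sg (R : Type*) [CommRing R] (j : ℤ) : R := if Even j then 1 else -1

lemma sg_cases (R : Type*) [CommRing R] (j : ℤ) : sg R j = 1 ∨ sg R j = -1 := by
  unfold sg; split_ifs <;> simp
lemma sg_sq (R : Type*) [CommRing R] (j : ℤ) : sg R j * sg R j = 1 := by
  rcases sg_cases R j with h | h <;> simp [h]
lemma sg_succ (R : Type*) [CommRing R] (j : ℤ) : sg R (j + 1) = - sg R j := by
  unfold sg; by_cases h : Even j
  · rw [if_pos h, if_neg (by rw [Int.even_add_one]; simpa using h)]
  · rw [if_neg h, if_pos (by rw [Int.even_add_one]; simpa using h)]; simp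
lemma sg_pred (R : Type*) [CommRing R] (j : ℤ) : sg R (j - 1) = - sg R j := by
  have := sg_succ R (j - 1)
  rw [sub_add_cancel] at this
  rw [this, neg_neg]
lemma sg_map (j : ℤ) : (HahnSeries.C (sg K j) : LaurentSeries K) = sg (LaurentSeries K) j := by
  unfold sg; split_ifs <;> simp [map_neg]

lemma Ld_sg (j : ℤ) : Ld (sg (LaurentSeries K) j) 0 (sg K j) := by
  rw [← sg_map]; exact Ld_C _

lemma sg_coeff (j i : ℤ) (f : LaurentSeries K) :
    (sg (LaurentSeries K) j * f).coeff i = sg K j * f.coeff i := by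
  unfold sg; split_ifs <;> simp

lemma sg_bigO (j : ℤ) {f : LaurentSeries K} (h : BigO f m) :
    BigO (sg (LaurentSeries K) j * f) m := fun i hi => by rw [sg_coeff, h i hi, mul_zero]

/-- shift -/
def shf (n : ℤ) (x : ℤ → LaurentSeries K) (j : ℤ) : LaurentSeries K := x (n + j)
/-- reflection -/
def rfn (n : ℤ) (x : ℤ → LaurentSeries K) (j : ℤ) : LaurentSeries K :=
  sg (LaurentSeries K) j * x (n - j)

lemma OdeG.shf {g : ℤ → LaurentSeries K} (h : OdeG x g) (n : ℤ) :
    OdeG (SingConf.shf n x) (SingConf.shf n g) := by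
  intro j
  have := h (n + j)
  simpa only [SingConf.shf, add_assoc, add_sub_assoc] using this

lemma th_sg (j : ℤ) (f : LaurentSeries K) :
    th (sg (LaurentSeries K) j * f) = sg (LaurentSeries K) j * th f := by
  ext i; rw [sg_coeff, th_coeff, th_coeff, sg_coeff]; ring

lemma OdeG.rfn {g : ℤ → LaurentSeries K} (h : OdeG x g) (n : ℤ) :
    OdeG (SingConf.rfn n x) (SingConf.rfn n g) := by
  intro j
  have := h (n - j)
  simp only [SingConf.rfn]
  rw [th_sg, this, sg_succ, sg_pred, show n - (j + 1) = n - j - 1 by ring,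
    show n - (j - 1) = n - j + 1 by ring]
  linear_combination (sg (LaurentSeries K) j * tau * x (n - j) ^ 2 * 
    (g (n - j + 1) - g (n - j - 1))) * (sg_sq (LaurentSeries K) j)

lemma Dat.rfn {n : ℤ} {ε p q : K} (h : Dat (shf n x) ε p q) :
    Dat (SingConf.rfn n x) ε (-q) (-p) := by
  have s1 : sg K 1 = -1 := by simp [sg]
  have sm : sg K (-1) = -1 := by simp [sg]
  have e : ∀ j, SingConf.rfn n x j = sg (LaurentSeries K) j * shf n x (-j) := by
    intro j; simp [SingConf.rfn, shf, sub_eq_add_neg]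
  have hode : OdeX x := by
    intro k
    have := h.ode (k - n)
    simp only [shf] at this
    rw [show n + (k - n) = k by ring, show n + (k - n + 1) = k + 1 by ring,
      show n + (k - n - 1) = k - 1 by ring] at this
    exact this
  refine ⟨OdeG.rfn hode n, ?_, ?_, ?_, ?_, ?_, ?_, h.he, ?_⟩
  · intro k hk
    rw [e]; exact sg_bigO _ (h.reg _ (by omega))
  · rw [e]
    have := h.l0
    simpa [sg] using this
  · rw [e, sg_coeff, s1, h.m1]; ring
  · rw [e, sg_coeff, sm, neg_neg, h.l1]; ring
  · rw [e, sg_coeff, s1, h.d1]; ring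
  · rw [e, sg_coeff, sm, neg_neg, h.c1]; ring
  · intro k hk
    rw [e, sg_coeff]
    have := h.hb (-k) (by omega)
    rwa [mul_mul_mul_comm, sg_sq, one_mul]

end Loc

section Main
variable {K : Type*} [Field K] [CharZero K]
variable {u : ℕ → LaurentSeries K} {x z : ℤ → LaurentSeries K} {N : ℕ} {n : ℤ} {ε p q : K}

lemma ode_of_shf (h : OdeX (shf n x)) : OdeX x := by
  intro k
  have := h (k - n)
  simp only [shf] at this
  rw [show n + (k - n) = k by ring, show n + (k - n + 1) = k + 1 by ring,
    show n + (k - n - 1) = k - 1 by ring] at this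
  exact this

lemma gam_ode (hX : Dat (shf n x) ε p q) (hne : ∀ k, x k ≠ 0) (hN : 1 ≤ N)
    (hu : ∀ i, th (u i) = if i = 1 then tau else 0) : OdeG x (GamSD N u x) :=
  Gam_D th tau x (ode_of_shf hX.ode) hne N hN u hu

lemma gam_reg_lo (hX : Dat (shf n x) ε p q) (hN : 1 ≤ N) (hu2 : ∀ i, BigO (u i) 0)
    (k : ℤ) (hk : k ≤ -1 - N) : BigO (GamSD N u x (n + k)) 0 := by
  refine Gam_mem regS N hN u hu2 x _ fun l h1 h2 => ?_
  have := hX.reg (l - n) (by omega)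
  rwa [shf, show n + (l - n) = l by ring] at this

lemma gam_reg_hi (hX : Dat (shf n x) ε p q) (hN : 1 ≤ N) (hu2 : ∀ i, BigO (u i) 0)
    (k : ℤ) (hk : 1 + N ≤ k) : BigO (GamSD N u x (n + k)) 0 := by
  refine Gam_mem regS N hN u hu2 x _ fun l h1 h2 => ?_
  have := hX.reg (l - n) (by omega)
  rwa [shf, show n + (l - n) = l by ring] at this

lemma gam_regs (hX : Dat (shf n x) ε p q) (hne : ∀ k, x k ≠ 0) (hN : 1 ≤ N)
    (hu : ∀ i, th (u i) = if i = 1 then tau else 0) (hu2 : ∀ i, BigO (u i) 0) :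
    (∀ k ≤ -1, BigO (shf n (GamSD N u x) k) 0) ∧
    (∀ k ≤ -1, BigO (rfn n (GamSD N u x) k) 0) ∧
    Ld (GamSD N u x n) (-1) (((GamSD N u x (n + 1)).coeff 0 - (GamSD N u x (n - 1)).coeff 0) / 4)
    := by
  have hg := gam_ode hX hne hN hu
  have r1 := reg_neg hX (hg.shf n) (-1 - N) (fun k hk => gam_reg_lo hX hN hu2 k hk)
  have r2 := reg_neg hX.rfn (hg.rfn n) (-1 - N) (fun k hk => by
    have := gam_reg_hi hX hN hu2 (-k) (by omega)
    exact sg_bigO _ (by rwa [sub_eq_add_neg]))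
  refine ⟨r1, r2, ?_⟩
  have h1 : BigO (shf n (GamSD N u x) 1) 0 := by
    have := sg_bigO (-1) (r2 (-1) le_rfl)
    rw [rfn, ← mul_assoc, sg_sq, one_mul, sub_neg_eq_add] at this
    exact this
  have := g_zero hX (hg.shf n) h1 (r1 (-1) le_rfl)
  simpa only [shf, add_zero, ← sub_eq_add_neg] using this

/-- variation in the upward direction -/
theorem var_hi (hX : Dat (shf n x) ε p q) (hZ : Dat (shf n z) ε p q)
    (hxne : ∀ k, x k ≠ 0) (hzne : ∀ k, z k ≠ 0) (hq : q ≠ 0) (hN : 1 ≤ N)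
    (hu : ∀ i, th (u i) = if i = 1 then tau else 0) (hu2 : ∀ i, BigO (u i) 0)
    (hb : ∀ k : ℤ, (2 ≤ k ∨ k ≤ -2) → k < N + 1 → (shf n z k).coeff 0 = (shf n x k).coeff 0) :
    (GamSD N u z n - GamSD N u x n).coeff 0 = (kap N : K) * (u N).coeff 0 * p *
      vprod (shf n z) 2 (N - 1) * (z (n + (N + 1)) - x (n + (N + 1))).coeff 0 := by
  have hg := gam_ode hX hxne hN hu
  have hh := gam_ode hZ hzne hN hu
  obtain ⟨r1, -, r3⟩ := gam_regs hX hxne hN hu hu2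
  have ord := cmp_ord hX hZ (N + 1) (by omega) hb
  have P : ∀ l ≤ n - 2, BigO (x l) 0 ∧ BigO (z l) 0 ∧ BigO (z l - x l) (N + 2 + 1) := by
    intro l hl
    have a1 := hX.reg (l - n) (by omega)
    have a2 := hZ.reg (l - n) (by omega)
    have a3 := ord (l - n)
    simp only [shf, show n + (l - n) = l by ring] at a1 a2 a3
    refine ⟨a1, a2, a3.mono ?_⟩
    unfold ek; split_ifs <;> omega
  have i1 : BigO (shf n (GamSD N u z) (-2 - N) - shf n (GamSD N u x) (-2 - N)) (N + 3) :=
    (loc hN hu2 (fun l h1 h2 => P l (by omega))).mono (by omega)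
  have Q := locU (k := n + (-1 - N)) (m := N + 2 + 1) hN hu2 (fun l h1 h2 => P l (by omega))
  have em : n + (-1 - (N : ℤ)) + N = n + -1 := by ring
  rw [em] at Q
  have om : BigO (z (n + -1) - x (n + -1)) (N + 2) := by
    have h1 : ¬ ((-1 : ℤ) = 1) := by norm_num
    have h2 : ¬ ((-1 : ℤ) = 0) := by norm_num
    have := ord (-1)
    rw [ek, if_neg h1, if_neg h2] at this
    exact this.mono (by omega)
  have T : Ld (topU z N (n + (-1 - N))) 0 (vprod (shf n z) (-1 - N) N) := by
    refine Ld_prod _ _ _ fun i hi => ?_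
    have := Finset.mem_range.1 hi
    have := hZ.vk (-1 - N + i) (by omega)
    simpa only [shf, add_assoc] using this
  have i2 := i2_aux Q.1 Q.2 (hu2 N).ld T (hX.reg (-1) (by omega)) om.ld
  have r0 : BigO (shf n (GamSD N u x) 0) (-1) := by
    rw [shf, add_zero]; exact r3.1
  have fin := eta_zero hX hZ hq N hN hb (hg.shf n) (hh.shf n) r1 r0 _ i1 i2
  simpa only [shf, add_zero] using fin

/-- variation in the downward direction -/
theorem var_lo (hX : Dat (shf n x) ε p q) (hZ : Dat (shf n z) ε p q)
    (hxne : ∀ k, x k ≠ 0) (hzne : ∀ k, z k ≠ 0) (hp : p ≠ 0) (hN : 1 ≤ N)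
    (hu : ∀ i, th (u i) = if i = 1 then tau else 0) (hu2 : ∀ i, BigO (u i) 0)
    (hb : ∀ k : ℤ, (2 ≤ k ∨ k ≤ -2) → -(N + 1) < k → (shf n z k).coeff 0 = (shf n x k).coeff 0) :
    (GamSD N u z n - GamSD N u x n).coeff 0 = (kap N : K) * (u N).coeff 0 * q *
      vprod (rfn n z) 2 (N - 1) * (z (n - (N + 1)) - x (n - (N + 1))).coeff 0 := by
  have hX' := hX.rfn
  have hZ' := hZ.rfn
  have hb' : ∀ k : ℤ, (2 ≤ k ∨ k ≤ -2) → k < N + 1 →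
      (rfn n z k).coeff 0 = (rfn n x k).coeff 0 := by
    intro k h1 h2
    have := hb (-k) (by omega) (by omega)
    simp only [shf, ← sub_eq_add_neg] at this
    rw [rfn, rfn, sg_coeff, sg_coeff, this]
  have hg := gam_ode hX hxne hN hu
  have hh := gam_ode hZ hzne hN hu
  obtain ⟨-, r1, r3⟩ := gam_regs hX hxne hN hu hu2
  have ord := cmp_ord hX' hZ' (N + 1) (by omega) hb'
  have P : ∀ l, n + 2 ≤ l → BigO (x l) 0 ∧ BigO (z l) 0 ∧ BigO (z l - x l) (N + 2 + 1) := by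
    intro l hl
    have a1 := hX.reg (l - n) (by omega)
    have a2 := hZ.reg (l - n) (by omega)
    have a3 := sg_bigO (n - l) (ord (n - l))
    simp only [rfn, ← mul_sub, ← mul_assoc, sg_sq, one_mul] at a3
    simp only [shf, show n + (l - n) = l by ring, show n - (n - l) = l by ring] at a1 a2 a3
    refine ⟨a1, a2, a3.mono ?_⟩
    unfold ek; split_ifs <;> omega
  have i1 : BigO (rfn n (GamSD N u z) (-2 - N) - rfn n (GamSD N u x) (-2 - N)) (N + 3) := by
    rw [rfn, rfn, ← mul_sub]
    exact sg_bigO _ ((loc hN hu2 (fun l h1 h2 => P l (by omega))).mono (by omega))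
  have Q := locD (k := n - (-1 - N)) (m := N + 2 + 1) hN hu2 (fun l h1 h2 => P l (by omega))
  have em : n - (-1 - (N : ℤ)) - N = n - -1 := by ring
  rw [em] at Q
  have om : BigO (rfn n z (-1) - rfn n x (-1)) (N + 2) := by
    have h1 : ¬ ((-1 : ℤ) = 1) := by norm_num
    have h2 : ¬ ((-1 : ℤ) = 0) := by norm_num
    have := ord (-1)
    rw [ek, if_neg h1, if_neg h2] at this
    exact this.mono (by omega)
  have hxm : ∀ y : ℤ → LaurentSeries K, rfn n y (-1) = - y (n - -1) := by
    intro y; simp [rfn, sg]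
  have om' : Ld (z (n - -1) - x (n - -1)) (N + 2) (-(rfn n z (-1) - rfn n x (-1)).coeff (N + 2)) := by
    have := om.ld.neg
    rw [hxm, hxm] at this ⊢
    rwa [show -(-z (n - -1) - -x (n - -1)) = z (n - -1) - x (n - -1) by ring] at this
  have T : Ld (topD z N (n - (-1 - N))) 0 (vprod (rfn n z) (-1 - N) N) := by
    refine Ld_prod _ _ _ fun i hi => ?_
    have := Finset.mem_range.1 hi
    have := hZ'.vk (-1 - N + i) (by omega)
    rw [rfn, mul_mul_mul_comm, sg_sq, one_mul, sub_add_eq_sub_sub] at this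
    rw [rfn, sub_add_eq_sub_sub]
    exact this
  have hxr : BigO (x (n - -1)) 0 := by
    have := hX.reg 1 (by omega)
    rwa [sub_neg_eq_add]
  have i2 := i2_aux Q.1 Q.2 (hu2 N).ld T hxr om'
  have i2' : Ld (rfn n (GamSD N u z) (-1 - N) - rfn n (GamSD N u x) (-1 - N)) (N + 2)
      ((-(sg K (-1 - N)) * (u N).coeff 0) * vprod (rfn n z) (-1 - N) N *
        (rfn n z (-1) - rfn n x (-1)).coeff (N + 2)) := by
    have := ((Ld_sg (-1 - N)).mul i2).cast (zero_add _) rfl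
    have e : rfn n (GamSD N u z) (-1 - N) - rfn n (GamSD N u x) (-1 - N) =
      sg (LaurentSeries K) (-1 - N) * (GamSD N u z (n - (-1 - N)) - GamSD N u x (n - (-1 - N))) := by
      rw [rfn, rfn]; ring
    rw [e]
    exact this.cast rfl (by ring)
  have r0 : BigO (rfn n (GamSD N u x) 0) (-1) := by
    rw [rfn, sub_zero]; exact sg_bigO _ r3.1
  have fin := eta_zero hX' hZ' (neg_ne_zero.2 hp) N hN hb' (hg.rfn n) (hh.rfn n) r1 r0 _ i1 i2'
  have s0 : ∀ y : ℤ → LaurentSeries K, rfn n y 0 = y n := by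
    intro y; simp [rfn, sg]
  rw [s0, s0] at fin
  rw [fin]
  have e : rfn n z (N + 1) - rfn n x (N + 1) = sg (LaurentSeries K) (N + 1) *
    (z (n - (N + 1)) - x (n - (N + 1))) := by rw [rfn, rfn]; ring
  have es : sg K (-1 - N) = sg K (N + 1) := by
    unfold sg
    rw [show (-1 - (N : ℤ)) = -(N + 1) by ring]
    simp only [even_neg]
  rw [e, sg_coeff, es]
  have := sg_sq K (N + 1)
  linear_combination ((kap N : K) * (u N).coeff 0 * q *
      vprod (rfn n z) 2 (N - 1) * (z (n - (N + 1)) - x (n - (N + 1))).coeff 0) * this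

end Main
end SingConf

namespace SingConf

set_option linter.unusedSectionVars false
set_option linter.unusedVariables false

section Poly
variable {K : Type*} [Field K] [CharZero K] (T : Subring K)

/-- coefficients below `m` lie in `T` -/
def Cf (f : LaurentSeries K) (m : ℤ) : Prop := ∀ i < m, f.coeff i ∈ T

variable {T}
variable {f g : LaurentSeries K} {a b m m' c : ℤ}

lemma Cf.mul (hf : BigO f a) (hg : BigO g b) (cf : Cf T f m) (cg : Cf T g m')
    (h1 : c ≤ m + b) (h2 : c ≤ m' + a) : Cf T (f * g) c := by
  intro s hs
  refine coeff_mul_mem T.toAddSubgroup f g s fun i j hij => ?_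
  change f.coeff i * g.coeff j ∈ T
  by_cases hi : i < a
  · rw [hf i hi, zero_mul]; exact T.zero_mem
  by_cases hj : j < b
  · rw [hg j hj, mul_zero]; exact T.zero_mem
  exact T.mul_mem (cf i (by omega)) (cg j (by omega))

lemma Cf.sub (cf : Cf T f m) (cg : Cf T g m) : Cf T (f - g) m := fun i hi => by
  rw [HahnSeries.coeff_sub]; exact T.sub_mem (cf i hi) (cg i hi)
lemma Cf.mono (cf : Cf T f m) (h : m' ≤ m) : Cf T f m' := fun i hi => cf i (by omega)
lemma BigO.cf (hf : BigO f m) : Cf T f m := fun i hi => by rw [hf i hi]; exact T.zero_mem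

lemma Cf_one (m : ℤ) : Cf T (1 : LaurentSeries K) m := fun i _ => by
  rw [HahnSeries.coeff_one]; split_ifs
  · exact T.one_mem
  · exact T.zero_mem

lemma Cf.tau (cf : Cf T f m) : Cf T (SingConf.tau * f) (m + 1) := fun i hi => by
  rw [tau_mul_coeff]; exact cf _ (by omega)

lemma Cf.succ (cf : Cf T f m) (h : f.coeff m ∈ T) : Cf T f (m + 1) := fun i hi => by
  rcases lt_or_eq_of_le (show i ≤ m by omega) with h1 | h1
  · exact cf i h1
  · rw [h1]; exact h

/-- the monomial of order m -/
def mnm (f : LaurentSeries K) (m : ℤ) : LaurentSeries K := HahnSeries.single m (f.coeff m)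

lemma Ld_mnm (f : LaurentSeries K) (m : ℤ) : Ld (mnm f m) m (f.coeff m) := by
  refine ⟨fun i hi => ?_, by simp [mnm]⟩
  simp [mnm, HahnSeries.coeff_single_of_ne hi.ne]

lemma Cf.sub_mnm (cf : Cf T f m) : Cf T (f - mnm f m) (m + 1) := by
  refine Cf.succ (cf.sub (Ld_mnm f m).1.cf) ?_
  simp [mnm]

/-- key step: resonance-type equations -/
lemma cf_key {F W : LaurentSeries K} (e : th F = tau * ((1 - F * F) * W)) {o w : ℤ} {c d : K}
    (hF : Ld F o c) (hom : o < m) (cF : Cf T F m) (hW : Ld W w d)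
    (hsum : o + w = -1) (s : ℤ) (hP : BigO (1 - F * F) s)
    (hPm : s ≤ m + o) (cW : Cf T W (m - s)) :
    ((m : K) + 2 * c * d) * F.coeff m ∈ T := by
  set R := mnm F m with hR
  have lR := Ld_mnm F m
  rw [← hR] at lR
  set P := F - R with hPdef
  have cP : Cf T P (m + 1) := cF.sub_mnm
  have lP : Ld P o c := (hF.sub (lR.1.ld0 hom)).cast rfl (by ring)
  have l2 : Ld (P + F) o (2 * c) := (lP.add hF).cast rfl (by ring)
  have e2 : 1 - F * F = (1 - P * P) - R * (P + F) := by rw [hPdef]; ring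
  have bP : BigO (1 - P * P) s := by
    have : 1 - P * P = (1 - F * F) + R * (P + F) := by rw [e2]; ring
    rw [this]
    exact hP.add ((lR.1.mul l2.1).mono hPm)
  have c1 : Cf T (1 - P * P) (m + 1 + o) :=
    (Cf_one _).sub (cP.mul lP.1 lP.1 cP le_rfl le_rfl)
  have c2 : Cf T (tau * ((1 - P * P) * W)) (m + 1) := 
    (Cf.mul bP hW.1 c1 cW (c := m) (by omega) (by omega)).tau
  have l3 := (Ld_tau.mul (lR.mul (l2.mul hW))).cast
    (show 1 + (m + (o + w)) = m by omega) rfl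
  have e3 : th F = tau * ((1 - P * P) * W) - tau * (R * ((P + F) * W)) := by
    rw [e, e2]; ring
  have e4 := congrArg (fun f => HahnSeries.coeff f m) e3
  simp only [th_coeff, HahnSeries.coeff_sub, l3.2] at e4
  have := c2 m (by omega)
  have e5 : ((m : K) + 2 * c * d) * F.coeff m = (tau * ((1 - P * P) * W)).coeff m := by
    linear_combination e4
  rw [e5]; exact this

variable {X : ℤ → LaurentSeries K} {ε p q : K}

lemma poly_coeffs (hX : Dat X ε p q) (hT : ∀ (m : ℤ) (y : K), m ≠ 0 → (m : K) * y ∈ T → y ∈ T)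
    (he : ε ∈ T) (hp : p ∈ T) (hq : q ∈ T)
    (hb : ∀ k, (2 ≤ k ∨ k ≤ -2) → (X k).coeff 0 ∈ T) (k m : ℤ) : Cf T (X k) m := by
  have key : ∀ m : ℕ, (∀ k, k ≠ 0 → Cf T (X k) m) ∧ Cf T (X 0) (m - 1) := by
    intro m
    induction m with
    | zero =>
      exact ⟨fun k hk => (hX.reg k hk).cf.mono (by simp), hX.l0.1.cf.mono (by simp)⟩
    | succ m ih =>
      obtain ⟨ih, ih0⟩ := ih
      have A : ∀ k, k ≠ 0 → Cf T (X k) ((m : ℤ) + 1) := by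
        intro k hk
        refine (ih k hk).succ ?_
        have h4 : (4 : K) ∈ T := by
          have := natCast_mem T 4
          simpa using this
        by_cases hk1 : k = 1
        · subst hk1
          rcases Nat.lt_or_ge m 2 with hm | hm
          · interval_cases m
            · push_cast; rw [hX.l1]; exact T.neg_mem he
            · push_cast; rw [hX.c1]; exact T.mul_mem (T.mul_mem h4 he) hp
          have e := hX.ode 1
          rw [show (1 : ℤ) + 1 = 2 by norm_num, show (1 : ℤ) - 1 = 0 by norm_num] at e
          have lW := ((hX.reg 2 (by norm_num)).ld0 (show (-1 : ℤ) < 0 by norm_num)).sub hX.l0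
          have := cf_key e ((hX.reg 1 (by norm_num)).ld.cast rfl hX.l1) (m := m) (by omega)
            (ih 1 (by norm_num)) lW (by norm_num) 1 hX.v1.1 (by omega)
            (((ih 2 (by norm_num)).mono (by omega)).sub (ih0.mono (by omega)))
          refine hT ((m : ℤ) - 1) _ (by omega) ?_
          convert this using 1
          push_cast
          linear_combination (X 1).coeff m * hX.he
        by_cases hk2 : k = -1
        · subst hk2
          rcases Nat.lt_or_ge m 2 with hm | hm
          · interval_cases m
            · push_cast; rw [hX.m1]; exact he
            · push_cast; rw [hX.d1]; exact T.mul_mem (T.mul_mem h4 he) hq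
          have e := hX.ode (-1)
          rw [show (-1 : ℤ) + 1 = 0 by norm_num, show (-1 : ℤ) - 1 = -2 by norm_num] at e
          have lW := hX.l0.sub ((hX.reg (-2) (by norm_num)).ld0 (show (-1 : ℤ) < 0 by norm_num))
          have := cf_key e ((hX.reg (-1) (by norm_num)).ld.cast rfl hX.m1) (m := m) (by omega)
            (ih (-1) (by norm_num)) lW (by norm_num) 1 hX.vm1.1 (by omega)
            ((ih0.mono (by omega)).sub ((ih (-2) (by norm_num)).mono (by omega)))
          refine hT ((m : ℤ) - 1) _ (by omega) ?_
          convert this using 1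
          push_cast
          linear_combination (X (-1)).coeff m * hX.he
        have hk3 : 2 ≤ k ∨ k ≤ -2 := by omega
        rcases Nat.eq_zero_or_pos m with hm | hm
        · subst hm; exact hb k hk3
        refine hT m _ (by omega) ?_
        have e := hX.ode k
        have cv : Cf T (1 - X k * X k) m := (Cf_one _).sub
          ((ih k hk).mul (hX.reg k hk) (hX.reg k hk) (ih k hk) (by omega) (by omega))
        have cW := (ih (k + 1) (by omega)).sub (ih (k - 1) (by omega))
        have := (cv.mul (hX.vk k hk).1 ((hX.reg (k + 1) (by omega)).sub
          (hX.reg (k - 1) (by omega))) cW (c := m) (by omega) (by omega)).tau m (by omega)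
        rw [← e, th_coeff] at this
        exact this
      refine ⟨fun k hk => by push_cast; exact A k hk, ?_⟩
      rcases Nat.eq_zero_or_pos m with hm | hm
      · subst hm
        refine Cf.mono (m := -1 + 1) (hX.l0.1.cf.succ ?_) (by norm_num)
        rw [hX.l0.2]
        refine hT 2 _ (by norm_num) ?_
        push_cast
        rw [show (2 : K) * (-ε / 2) = -ε by ring]
        exact T.neg_mem he
      · refine Cf.mono (m := (m : ℤ) - 1 + 1) (ih0.succ ?_) (by push_cast; omega)
        have e := hX.ode 0
        rw [zero_add, zero_sub] at e
        have lW := (hX.reg 1 (by norm_num)).ld.sub (hX.reg (-1) (by norm_num)).ld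
        have := cf_key e hX.l0 (m := (m : ℤ) - 1) (by omega) ih0 lW (by norm_num)
          (-2) hX.v0.1 (by omega)
          (((A 1 (by norm_num)).mono (by omega)).sub ((A (-1) (by norm_num)).mono (by omega)))
        refine hT ((m : ℤ) + 1) _ (by omega) ?_
        convert this using 1
        rw [hX.l1, hX.m1]
        push_cast
        linear_combination (-2) * (X 0).coeff ((m : ℤ) - 1) * hX.he
  by_cases hk : k = 0
  · subst hk
    exact (key (m + 1).toNat).2.mono (by omega)
  · exact ((key m.toNat).1 k hk).mono (by omega)

/-- series with coefficients in `T` -/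
def serS (T : Subring K) : Subring (LaurentSeries K) where
  carrier := {f | ∀ m, f.coeff m ∈ T}
  mul_mem' := fun {a b} ha hb m => coeff_mul_mem T.toAddSubgroup a b m
    fun i j _ => T.mul_mem (ha i) (hb j)
  one_mem' := fun m => Cf_one (m + 1) m (by omega)
  add_mem' := fun {a b} ha hb m => by
    rw [HahnSeries.coeff_add]; exact T.add_mem (ha m) (hb m)
  zero_mem' := fun m => by simp [T.zero_mem]
  neg_mem' := fun {a} ha m => by rw [HahnSeries.coeff_neg]; exact T.neg_mem (ha m)

lemma gam_poly {x : ℤ → LaurentSeries K} {n : ℤ} {N : ℕ} (hN : 1 ≤ N) {u : ℕ → LaurentSeries K}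
    (hX : Dat (shf n x) ε p q) (hT : ∀ (m : ℤ) (y : K), m ≠ 0 → (m : K) * y ∈ T → y ∈ T)
    (he : ε ∈ T) (hp : p ∈ T) (hq : q ∈ T)
    (hb : ∀ k, (2 ≤ k ∨ k ≤ -2) → (shf n x k).coeff 0 ∈ T)
    (hu : ∀ i m, (u i).coeff m ∈ T) (k m : ℤ) : (GamSD N u x k).coeff m ∈ T := by
  refine Gam_mem (serS T) N hN u hu x k (fun l _ _ m => ?_) m
  have := poly_coeffs hX hT he hp hq hb (l - n) (m + 1) m (by omega)
  rwa [shf, show n + (l - n) = l by ring] at this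

end Poly
end SingConf

namespace SingConf

set_option linter.unusedSectionVars false
set_option linter.unusedVariables false
set_option linter.unnecessarySimpa false

section Scale
variable {K : Type*} [Field K] [CharZero K]

/-- coefficientwise map of Laurent series -/
def mapL (φ : K →+* K) : LaurentSeries K →+* LaurentSeries K where
  toFun f := HahnSeries.map f φ
  map_one' := by
    ext m
    simp only [HahnSeries.map_coeff, HahnSeries.coeff_one]
    split_ifs <;> simp
  map_mul' f g := HahnSeries.map_mul (φ : K →ₙ+* K)
  map_zero' := by ext m; simp
  map_add' f g := by ext m; simp

lemma mapL_coeff (φ : K →+* K) (f : LaurentSeries K) (m : ℤ) :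
    (mapL φ f).coeff m = φ (f.coeff m) := rfl

lemma mapL_bigO (φ : K →+* K) {f : LaurentSeries K} {m : ℤ} (h : BigO f m) :
    BigO (mapL φ f) m := fun i hi => by rw [mapL_coeff, h i hi, map_zero]

lemma mapL_tau (φ : K →+* K) : mapL φ tau = tau := by
  ext m
  rw [mapL_coeff]
  by_cases hm : m = 1
  · simp [hm, tau]
  · simp [tau, HahnSeries.coeff_single_of_ne hm]

lemma mapL_C (φ : K →+* K) (c : K) : mapL φ (HahnSeries.C c) = HahnSeries.C (φ c) := by
  ext m
  rw [mapL_coeff]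
  by_cases hm : m = 0
  · simp [hm]
  · simp [HahnSeries.C_apply, HahnSeries.coeff_single_of_ne hm]

lemma mapL_th (φ : K →+* K) (f : LaurentSeries K) : th (mapL φ f) = mapL φ (th f) := by
  ext m
  rw [th_coeff, mapL_coeff, mapL_coeff, th_coeff, map_mul, map_intCast]

lemma Dat.map {X : ℤ → LaurentSeries K} {ε p q : K} (h : Dat X ε p q) (φ : K →+* K)
    (he : φ ε = ε) (hp : φ p = p) (hq : φ q = q) : Dat (fun k => mapL φ (X k)) ε p q where
  ode := fun k => by
    rw [mapL_th, h.ode k]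
    simp only [map_mul, map_sub, map_one, mapL_tau]
  reg := fun k hk => mapL_bigO φ (h.reg k hk)
  l0 := ⟨mapL_bigO φ h.l0.1, by
    rw [mapL_coeff, h.l0.2, map_div₀, map_neg, he, map_ofNat]⟩
  l1 := by rw [mapL_coeff, h.l1, map_neg, he]
  m1 := by rw [mapL_coeff, h.m1, he]
  c1 := by rw [mapL_coeff, h.c1, map_mul, map_mul, he, hp, map_ofNat]
  d1 := by rw [mapL_coeff, h.d1, map_mul, map_mul, he, hq, map_ofNat]
  he := h.he
  hb := fun k hk => by
    rw [mapL_coeff, ← map_mul, ← map_one φ, ← map_sub]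
    exact (map_ne_zero φ).2 (h.hb k hk)

lemma vprod_mem (R : Subring K) (X : ℤ → LaurentSeries K) (k : ℤ) (j : ℕ)
    (h : ∀ i : ℕ, i < j → (X (k + i)).coeff 0 ∈ R) : vprod X k j ∈ R :=
  R.prod_mem fun i hi => R.sub_mem R.one_mem
    (R.mul_mem (h i (Finset.mem_range.1 hi)) (h i (Finset.mem_range.1 hi)))

lemma vprod_map (φ : K →+* K) (X : ℤ → LaurentSeries K) (k : ℤ) (j : ℕ) :
    vprod (fun k => mapL φ (X k)) k j = φ (vprod X k j) := by
  unfold vprod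
  simp only [map_prod, map_sub, map_mul, map_one, mapL_coeff]

end Scale

section ScaleMv
open MvPolynomial
variable {I : Type*} [DecidableEq I]

/-- scaling of the variable `i` by 2 -/
def scl (i : I) : MvPolynomial I ℚ →ₐ[ℚ] MvPolynomial I ℚ :=
  aeval fun j => (C (if j = i then (2 : ℚ) else 1)) * X j

lemma scl_monomial (i : I) (m : I →₀ ℕ) (c : ℚ) :
    scl i (monomial m c) = monomial m (2 ^ m i * c) := by
  rw [scl, aeval_monomial, Finsupp.prod]
  simp only [mul_pow, Finset.prod_mul_distrib]
  have h1 : (∏ j ∈ m.support, (C (if j = i then (2 : ℚ) else 1) : MvPolynomial I ℚ) ^ m j)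
      = C (2 ^ m i) := by
    rw [Finset.prod_eq_single i]
    · simp
    · intro j _ hj; simp [hj]
    · intro h; simp [Finsupp.notMem_support_iff.1 h]
  rw [h1, monomial_eq (s := m), Finsupp.prod, algebraMap_eq, C_mul]
  ring

lemma coeff_scl (i : I) (m : I →₀ ℕ) (f : MvPolynomial I ℚ) :
    coeff m (scl i f) = 2 ^ m i * coeff m f := by
  induction f using MvPolynomial.induction_on' with
  | monomial u a =>
    rw [scl_monomial, coeff_monomial, coeff_monomial]
    split_ifs with h
    · rw [h]
    · simp
  | add p q hp hq => rw [map_add, coeff_add, coeff_add, hp, hq]; ring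

lemma scl_inj (i : I) : Function.Injective (scl i) := by
  intro f g h
  ext m
  have := congrArg (coeff m) h
  rw [coeff_scl, coeff_scl] at this
  exact mul_left_cancel₀ (by positivity) this

lemma scl_fix (i : I) (f : MvPolynomial I ℚ) (h : scl i f = f) (m : I →₀ ℕ)
    (hm : coeff m f ≠ 0) : m i = 0 := by
  have := congrArg (coeff m) h
  rw [coeff_scl] at this
  have h1 : (2 : ℚ) ^ m i = 1 := mul_right_cancel₀ hm (by rw [this, one_mul])
  by_contra h0
  exact absurd h1 (one_lt_pow₀ (by norm_num) h0).ne'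

variable {L : Type*} [Field L] [Algebra (MvPolynomial I ℚ) L] [IsFractionRing (MvPolynomial I ℚ) L]

lemma scl_injL (i : I) : Function.Injective
    ((algebraMap (MvPolynomial I ℚ) L).comp (scl i : MvPolynomial I ℚ →+* MvPolynomial I ℚ)) := by
  rw [RingHom.coe_comp]
  exact (IsFractionRing.injective (MvPolynomial I ℚ) L).comp (scl_inj i)

/-- scaling on the field -/
def sclK (L : Type*) [Field L] [Algebra (MvPolynomial I ℚ) L]
    [IsFractionRing (MvPolynomial I ℚ) L] (i : I) : L →+* L :=
  IsFractionRing.lift (scl_injL (L := L) i)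

lemma sclK_alg (i : I) (f : MvPolynomial I ℚ) :
    sclK L i (algebraMap _ L f) = algebraMap _ L (scl i f) := by
  rw [sclK, IsFractionRing.lift_algebraMap]; rfl

lemma sclK_X (i j : I) (h : j ≠ i) : sclK L i (algebraMap (MvPolynomial I ℚ) L (X j)) =
    algebraMap (MvPolynomial I ℚ) L (X j) := by
  rw [sclK_alg]; congr 1
  simp [scl, h]

lemma fix_mem (S : Subring L) (P : I → Prop) (hX : ∀ i, P i → algebraMap (MvPolynomial I ℚ) L (X i) ∈ S)
    (hQ : ∀ c : ℚ, algebraMap (MvPolynomial I ℚ) L (C c) ∈ S)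
    {y : L} (hy : y ∈ (algebraMap (MvPolynomial I ℚ) L).range)
    (hf : ∀ i, ¬ P i → sclK L i y = y) : y ∈ S := by
  obtain ⟨f, rfl⟩ := hy
  have h1 : ∀ i, ¬ P i → scl i f = f := fun i hi => by
    have := hf i hi
    rw [sclK_alg] at this
    exact IsFractionRing.injective (MvPolynomial I ℚ) L this
  rw [f.as_sum, map_sum]
  refine S.sum_mem fun m hm => ?_
  rw [mem_support_iff] at hm
  rw [monomial_eq, map_mul, Finsupp.prod, map_prod]
  refine S.mul_mem (hQ _) (S.prod_mem fun j hj => ?_)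
  rw [map_pow]
  refine S.pow_mem (hX j ?_) _
  by_contra hP
  exact (Finsupp.mem_support_iff.1 hj) (scl_fix j f (h1 j hP) m hm)

end ScaleMv
end SingConf

namespace SingConf

set_option linter.unusedSectionVars false
set_option linter.unusedVariables false
set_option linter.unnecessarySimpa false

section Fin
open MvPolynomial
variable {n : ℤ} {N : ℕ}

lemma charZero_KSD (n : ℤ) (N : ℕ) : CharZero (KSD n N) := inferInstance

lemma av_off (k : ℤ) (h : k ≤ n - 2 ∨ n + 2 ≤ k) : avSD n N k =
    algebraMap (MvPolynomial (IdxSD n N) ℚ) (KSD n N) (X (Sum.inl ⟨k, h⟩)) := by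
  rw [avSD, if_neg (by omega), if_neg (by omega), dif_pos h]

lemma alg_ne {f : MvPolynomial (IdxSD n N) ℚ} (h : f ≠ 0) :
    algebraMap (MvPolynomial (IdxSD n N) ℚ) (KSD n N) f ≠ 0 := fun h0 =>
  h (IsFractionRing.injective (MvPolynomial (IdxSD n N) ℚ) (KSD n N) (h0.trans (map_zero _).symm))

lemma ap_ne : apSD n N ≠ 0 := alg_ne (X_ne_zero _)
lemma am_ne : amSD n N ≠ 0 := alg_ne (X_ne_zero _)
lemma av_ne (k : ℤ) (h : k ≤ n - 2 ∨ n + 2 ≤ k) : avSD n N k ≠ 0 := by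
  rw [av_off k h]; exact alg_ne (X_ne_zero _)
lemma uv_ne (hN : 1 ≤ N) : uvSD n N N ≠ 0 := by
  rw [uvSD, dif_pos ⟨hN, le_rfl⟩]; exact alg_ne (X_ne_zero _)

lemma av_sq (k : ℤ) (h : k ≤ n - 2 ∨ n + 2 ≤ k) : 1 - avSD n N k * avSD n N k ≠ 0 := by
  rw [av_off k h, ← map_mul, ← map_one (algebraMap (MvPolynomial (IdxSD n N) ℚ) (KSD n N)),
    ← map_sub]
  refine alg_ne fun h0 => ?_
  have := congrArg (eval fun _ => (0 : ℚ)) h0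
  simp at this

variable {ε : KSD n N} {x : ℤ → LaurentSeries (KSD n N)}

lemma sol_dat (hε : ε = 1 ∨ ε = -1) (hx : IsTheSDSol n N ε x) :
    Dat (shf n x) ε (apSD n N) (amSD n N) := by
  obtain ⟨h1, h2, h3, h4, h5, h6, h7, h8, h9⟩ := hx
  have he : ε * ε = 1 := by rcases hε with h | h <;> simp [h]
  have ho := h1.ode
  refine ⟨?_, ?_, ?_, h5, ?_, h7, ?_, he, ?_⟩
  · intro k
    have := ho (n + k)
    simp only [shf]
    rw [show n + (k + 1) = n + k + 1 by ring, show n + (k - 1) = n + k - 1 by ring]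
    exact this
  · intro k hk; exact h2 _ (by omega)
  · simp only [shf, add_zero]; exact ⟨h3, h4⟩
  · simp only [shf]; exact h6
  · simp only [shf]; exact h8
  · intro k hk
    have hk2 : 2 ≤ |n + k - n| := by
      rw [add_sub_cancel_left]
      rcases hk with h | h
      · exact le_trans h (le_abs_self k)
      · exact le_trans (by omega) (neg_le_abs k)
    simp only [shf]
    rw [h9 _ hk2]
    have := av_sq (n := n) (N := N) (n + k) (by omega)
    intro h0
    apply this
    linear_combination h0 + (avSD n N (n + k) * avSD n N (n + k)) * he

lemma sol_b (hx : IsTheSDSol n N ε x) (k : ℤ) (hk : k ≤ n - 2 ∨ n + 2 ≤ k) :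
    (x k).coeff 0 = ε * avSD n N k := by
  refine hx.2.2.2.2.2.2.2.2 k ?_
  rcases hk with h | h
  · exact le_trans (by omega) (neg_le_abs _)
  · exact le_trans (by omega) (le_abs_self _)

lemma sol_ne (hε : ε = 1 ∨ ε = -1) (hx : IsTheSDSol n N ε x) (k : ℤ) : x k ≠ 0 := by
  have e0 : ε ≠ 0 := by rcases hε with h | h <;> simp [h]
  have aux : ∀ m, (x k).coeff m ≠ 0 → x k ≠ 0 := fun m h h0 => h (by rw [h0]; simp)
  by_cases h1 : k = n
  · subst h1
    exact aux (-1) (by rw [hx.2.2.2.1]; simp [e0])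
  by_cases h2 : k = n + 1
  · subst h2; exact aux 0 (by rw [hx.2.2.2.2.1]; simp [e0])
  by_cases h3 : k = n - 1
  · subst h3; exact aux 0 (by rw [hx.2.2.2.2.2.1]; simp [e0])
  have h4 : k ≤ n - 2 ∨ n + 2 ≤ k := by omega
  exact aux 0 (by rw [sol_b hx k h4]; exact mul_ne_zero e0 (av_ne k h4))

lemma ut_th (i : ℕ) : th (utSD n N i) = if i = 1 then tau else 0 := by
  have h : utSD n N i = HahnSeries.C (uvSD n N i) + (if i = 1 then tau else 0) := rfl
  rw [h, map_add th, th_C, zero_add]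
  split_ifs
  · exact th_tau
  · ext m; rw [th_coeff]; simp

lemma ut_bigO (i : ℕ) : BigO (utSD n N i) 0 := by
  refine (Ld_C _).1.add ?_
  split_ifs
  · exact Ld_tau.1.mono (by norm_num)
  · intro m _; simp

lemma ut_c0 (i : ℕ) : (utSD n N i).coeff 0 = uvSD n N i := by
  have h : utSD n N i = HahnSeries.C (uvSD n N i) + (if i = 1 then tau else 0) := rfl
  rw [h, HahnSeries.coeff_add, (Ld_C _).2]
  split_ifs
  · rw [Ld_tau.1 0 (by norm_num), add_zero]
  · simp

lemma ut_mem (R : Subring (KSD n N)) (h : ∀ i, uvSD n N i ∈ R) (i : ℕ) (m : ℤ) :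
    (utSD n N i).coeff m ∈ R := by
  have e : utSD n N i = HahnSeries.C (uvSD n N i) + (if i = 1 then tau else 0) := rfl
  rw [e, HahnSeries.coeff_add]
  refine R.add_mem ?_ ?_
  · by_cases hm : m = 0
    · rw [hm, (Ld_C _).2]; exact h i
    · rw [HahnSeries.C_apply, HahnSeries.coeff_single_of_ne hm]; exact R.zero_mem
  · split_ifs
    · by_cases hm : m = 1
      · rw [hm, Ld_tau.2]; exact R.one_mem
      · rw [tau, HahnSeries.coeff_single_of_ne hm]; exact R.zero_mem
    · simp [R.zero_mem]

/-- The ring of the statement -/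
def RgS (n : ℤ) (N : ℕ) : Subring (KSD n N) := Subring.closure
          ((Subfield.closure {c : KSD n N | ∃ i : ℕ, 1 ≤ i ∧ i ≤ N ∧ c = uvSD n N i} :
              Subfield (KSD n N)) ∪
            {c : KSD n N | ∃ i : ℤ, n - N ≤ i ∧ i ≤ n + N ∧ c = avSD n N i} ∪
            {apSD n N, amSD n N})

lemma rg_ap : apSD n N ∈ RgS n N := Subring.subset_closure (Or.inr (Or.inl rfl))
lemma rg_am : amSD n N ∈ RgS n N := Subring.subset_closure (Or.inr (Or.inr rfl))
lemma rg_av (i : ℤ) (h1 : n - N ≤ i) (h2 : i ≤ n + N) : avSD n N i ∈ RgS n N :=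
  Subring.subset_closure (Or.inl (Or.inr ⟨i, h1, h2, rfl⟩))
lemma rg_uv (i : ℕ) (h1 : 1 ≤ i) (h2 : i ≤ N) : uvSD n N i ∈ RgS n N :=
  Subring.subset_closure (Or.inl (Or.inl (Subfield.subset_closure ⟨i, h1, h2, rfl⟩)))
lemma rg_rat (c : ℚ) : (c : KSD n N) ∈ RgS n N :=
  Subring.subset_closure (Or.inl (Or.inl (SubfieldClass.ratCast_mem _ c)))

lemma algC (c : ℚ) : algebraMap (MvPolynomial (IdxSD n N) ℚ) (KSD n N) (C c) = (c : KSD n N) :=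
  map_ratCast ((algebraMap (MvPolynomial (IdxSD n N) ℚ) (KSD n N)).comp C) c

/-- the scaling maps -/
def phi (n : ℤ) (N : ℕ) (k : ℤ) (hk : k ≤ n - 2 ∨ n + 2 ≤ k) : KSD n N →+* KSD n N :=
  sclK (KSD n N) (Sum.inl ⟨k, hk⟩ : IdxSD n N)

lemma phi_ap (k : ℤ) (hk) : phi n N k hk (apSD n N) = apSD n N := sclK_X _ _ (by simp)
lemma phi_am (k : ℤ) (hk) : phi n N k hk (amSD n N) = amSD n N := sclK_X _ _ (by simp)
lemma phi_uv (k : ℤ) (hk) (i : ℕ) : phi n N k hk (uvSD n N i) = uvSD n N i := by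
  rw [uvSD]; split_ifs
  · exact sclK_X _ _ (by simp)
  · exact map_zero _
lemma phi_av (k : ℤ) (hk) (i : ℤ) (h : i ≠ k) : phi n N k hk (avSD n N i) = avSD n N i := by
  rw [avSD]; split_ifs
  · rw [map_neg, map_one]
  · rw [map_one]
  · exact sclK_X _ _ (by simpa using h)
  · exact map_zero _
lemma phi_ut (k : ℤ) (hk) (i : ℕ) : mapL (phi n N k hk) (utSD n N i) = utSD n N i := by
  have e : utSD n N i = HahnSeries.C (uvSD n N i) + (if i = 1 then tau else 0) := rfl
  rw [e, map_add, mapL_C, phi_uv]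
  split_ifs
  · rw [mapL_tau]
  · rw [map_zero]
lemma phi_eps (k : ℤ) (hk) (hε : ε = 1 ∨ ε = -1) : phi n N k hk ε = ε := by
  rcases hε with h | h <;> simp [h]

lemma phi_rg (k : ℤ) (hk) (h : k < n - N ∨ n + N < k) {c : KSD n N} (hc : c ∈ RgS n N) :
    phi n N k hk c = c := by
  have : RgS n N ≤ (phi n N k hk).eqLocus (RingHom.id _) := by
    refine Subring.closure_le.2 ?_
    rintro y ((hy | ⟨i, h1, h2, rfl⟩) | (rfl | rfl))
    · have h3 : Subfield.closure {c : KSD n N | ∃ i : ℕ, 1 ≤ i ∧ i ≤ N ∧ c = uvSD n N i} ≤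
          (phi n N k hk).eqLocusField (RingHom.id _) := by
        refine Subfield.closure_le.2 ?_
        rintro _ ⟨i, _, _, rfl⟩
        exact phi_uv k hk i
      exact h3 hy
    · exact phi_av k hk i (by omega)
    · exact phi_ap k hk
    · exact phi_am k hk
  exact this hc

/-- coefficient C -/
def coC (n : ℤ) (N : ℕ) (ε : KSD n N) (x : ℤ → LaurentSeries (KSD n N)) : KSD n N :=
  ((kap N : ℚ) : KSD n N) * uvSD n N N * apSD n N * vprod (shf n x) 2 (N - 1) * ε
/-- coefficient B -/
def coB (n : ℤ) (N : ℕ) (ε : KSD n N) (x : ℤ → LaurentSeries (KSD n N)) : KSD n N :=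
  ((kap N : ℚ) : KSD n N) * uvSD n N N * amSD n N * vprod (rfn n x) 2 (N - 1) * ε

lemma eps_mem (R : Subring (KSD n N)) (hε : ε = 1 ∨ ε = -1) : ε ∈ R := by
  rcases hε with h | h <;> rw [h]
  · exact R.one_mem
  · exact R.neg_mem R.one_mem

lemma vp_shf (R : Subring (KSD n N)) (hε : ε = 1 ∨ ε = -1) (hx : IsTheSDSol n N ε x)
    (h : ∀ i : ℤ, n - N ≤ i → i ≤ n + N → avSD n N i ∈ R) :
    vprod (shf n x) 2 (N - 1) ∈ R := by
  refine vprod_mem R _ _ _ fun i hi => ?_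
  rw [shf, sol_b hx _ (by omega)]
  exact R.mul_mem (eps_mem R hε) (h _ (by omega) (by omega))

lemma vp_rfn (R : Subring (KSD n N)) (hε : ε = 1 ∨ ε = -1) (hx : IsTheSDSol n N ε x)
    (h : ∀ i : ℤ, n - N ≤ i → i ≤ n + N → avSD n N i ∈ R) :
    vprod (rfn n x) 2 (N - 1) ∈ R := by
  refine vprod_mem R _ _ _ fun i hi => ?_
  rw [rfn, sg_coeff, sol_b hx _ (by omega)]
  exact R.mul_mem (eps_mem R (sg_cases _ _)) 
    (R.mul_mem (eps_mem R hε) (h _ (by omega) (by omega)))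

lemma phi_F (hN : 1 ≤ N) (hε : ε = 1 ∨ ε = -1) (hx : IsTheSDSol n N ε x) (k : ℤ) (hk)
    (h : k < n - N ∨ n + N < k) :
    phi n N k hk ((GamSD N (utSD n N) x n).coeff 0) - (GamSD N (utSD n N) x n).coeff 0 =
     coB n N ε x * (phi n N k hk (avSD n N (n - N - 1)) - avSD n N (n - N - 1)) +
     coC n N ε x * (phi n N k hk (avSD n N (n + N + 1)) - avSD n N (n + N + 1)) := by
  set φ := phi n N k hk with hφ
  have hX := sol_dat hε hx
  have hZ := hX.map φ (phi_eps k hk hε) (phi_ap k hk) (phi_am k hk)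
  set z : ℤ → LaurentSeries (KSD n N) := fun j => mapL φ (x j) with hz
  change Dat (shf n z) _ _ _ at hZ
  have hxne := sol_ne hε hx
  have hzne : ∀ j, z j ≠ 0 := fun j => (map_ne_zero (mapL φ)).2 (hxne j)
  have eG : φ ((GamSD N (utSD n N) x n).coeff 0) = (GamSD N (utSD n N) z n).coeff 0 := by
    rw [← mapL_coeff, Gam_map]
    simp only [hφ, phi_ut]
    rfl
  have hb : ∀ j : ℤ, (2 ≤ j ∨ j ≤ -2) → n + j ≠ k →
      (shf n z j).coeff 0 = (shf n x j).coeff 0 := by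
    intro j hj hne
    simp only [shf, hz]
    rw [mapL_coeff, sol_b hx _ (by omega), map_mul, phi_eps k hk hε, phi_av k hk _ hne]
  rw [eG, ← HahnSeries.coeff_sub]
  rcases h with h | h
  · have := var_lo hX hZ hxne hzne ap_ne hN ut_th ut_bigO
      (fun j hj h2 => hb j hj (by omega))
    rw [this, ut_c0]
    have e1 : vprod (rfn n z) 2 (N - 1) = vprod (rfn n x) 2 (N - 1) := by
      have h1 : rfn n z = fun j => mapL φ (rfn n x j) := by
        funext j
        simp only [rfn, hz, map_mul]
        congr 1
        rcases sg_cases (LaurentSeries (KSD n N)) j with h | h <;> simp [h]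
      rw [h1, vprod_map]
      exact phi_rg k hk (Or.inl h) (vp_rfn _ hε hx rg_av)
    rw [e1, HahnSeries.coeff_sub, hz]
    simp only [mapL_coeff]
    rw [sol_b hx _ (by omega), map_mul, phi_eps k hk hε, phi_av k hk (n + N + 1) (by omega),
      show n - ((N : ℤ) + 1) = n - N - 1 by ring]
    unfold coB
    ring
  · have := var_hi hX hZ hxne hzne am_ne hN ut_th ut_bigO
      (fun j hj h2 => hb j hj (by omega))
    rw [this, ut_c0]
    have e1 : vprod (shf n z) 2 (N - 1) = vprod (shf n x) 2 (N - 1) := by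
      have h1 : shf n z = fun j => mapL φ (shf n x j) := rfl
      rw [h1, vprod_map]
      exact phi_rg k hk (Or.inr h) (vp_shf _ hε hx rg_av)
    rw [e1, HahnSeries.coeff_sub, hz]
    simp only [mapL_coeff]
    rw [sol_b hx _ (by omega), map_mul, phi_eps k hk hε, phi_av k hk (n - N - 1) (by omega),
      show n + ((N : ℤ) + 1) = n + N + 1 by ring]
    unfold coC
    ring

lemma co_mem (R : Subring (KSD n N)) (hN : 1 ≤ N) (hε : ε = 1 ∨ ε = -1)
    (hx : IsTheSDSol n N ε x)
    (h : ∀ i : ℤ, n - N ≤ i → i ≤ n + N → avSD n N i ∈ R) (hu : uvSD n N N ∈ R)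
    (hQ : ∀ c : ℚ, (c : KSD n N) ∈ R) (hp : apSD n N ∈ R) (hq : amSD n N ∈ R) :
    coB n N ε x ∈ R ∧ coC n N ε x ∈ R :=
  ⟨R.mul_mem (R.mul_mem (R.mul_mem (R.mul_mem (hQ _) hu) hq) (vp_rfn R hε hx h)) (eps_mem R hε),
   R.mul_mem (R.mul_mem (R.mul_mem (R.mul_mem (hQ _) hu) hp) (vp_shf R hε hx h)) (eps_mem R hε)⟩

lemma co_ne (hN : 1 ≤ N) (hε : ε = 1 ∨ ε = -1) (hx : IsTheSDSol n N ε x) :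
    coB n N ε x ≠ 0 ∧ coC n N ε x ≠ 0 := by
  have e0 : ε ≠ 0 := by rcases hε with h | h <;> simp [h]
  have hk : ((kap N : ℚ) : KSD n N) ≠ 0 := by exact_mod_cast kap_ne N hN
  have hX := sol_dat hε hx
  exact ⟨mul_ne_zero (mul_ne_zero (mul_ne_zero (mul_ne_zero hk (uv_ne hN)) am_ne)
      (vprod_ne hX.rfn 2 _ (Or.inl le_rfl))) e0,
    mul_ne_zero (mul_ne_zero (mul_ne_zero (mul_ne_zero hk (uv_ne hN)) ap_ne)
      (vprod_ne hX 2 _ (Or.inl le_rfl))) e0⟩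

/-- the polynomial subring -/
def TT (n : ℤ) (N : ℕ) : Subring (KSD n N) :=
  (algebraMap (MvPolynomial (IdxSD n N) ℚ) (KSD n N)).range

lemma tt_av (i : ℤ) : avSD n N i ∈ TT n N := by
  rw [avSD]; split_ifs
  · exact (TT n N).neg_mem (TT n N).one_mem
  · exact (TT n N).one_mem
  · exact ⟨_, rfl⟩
  · exact (TT n N).zero_mem
lemma tt_uv (i : ℕ) : uvSD n N i ∈ TT n N := by
  rw [uvSD]; split_ifs
  · exact ⟨_, rfl⟩
  · exact (TT n N).zero_mem
lemma tt_rat (c : ℚ) : (c : KSD n N) ∈ TT n N := ⟨C c, algC c⟩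

lemma F_mem (hN : 1 ≤ N) (hε : ε = 1 ∨ ε = -1) (hx : IsTheSDSol n N ε x) :
    (GamSD N (utSD n N) x n).coeff 0 ∈ TT n N := by
  refine gam_poly (T := TT n N) hN (sol_dat hε hx) ?_ (eps_mem _ hε) ⟨_, rfl⟩ ⟨_, rfl⟩ ?_
    (ut_mem _ tt_uv) n 0
  · intro m y hm hy
    have h := (TT n N).mul_mem (tt_rat ((m : ℚ)⁻¹)) hy
    have hm' : (m : KSD n N) ≠ 0 := by exact_mod_cast hm
    rw [← mul_assoc] at h
    push_cast at h
    rwa [inv_mul_cancel₀ hm', one_mul] at h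
  · intro k hk
    rw [shf, sol_b hx _ (by omega)]
    exact (TT n N).mul_mem (eps_mem _ hε) (tt_av _)

lemma A_mem (hN : 1 ≤ N) (hε : ε = 1 ∨ ε = -1) (hx : IsTheSDSol n N ε x) :
    (GamSD N (utSD n N) x n).coeff 0 - coB n N ε x * avSD n N (n - N - 1) -
      coC n N ε x * avSD n N (n + N + 1) ∈ RgS n N := by
  have hT := co_mem (TT n N) hN hε hx (fun i _ _ => tt_av i) (tt_uv N) tt_rat ⟨_, rfl⟩ ⟨_, rfl⟩
  have hR := co_mem (RgS n N) hN hε hx rg_av (rg_uv N hN le_rfl) rg_rat rg_ap rg_am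
  refine fix_mem (RgS n N)
    (fun i => ∀ k hk, i = Sum.inl ⟨k, hk⟩ → n - N ≤ k ∧ k ≤ n + N) ?_ ?_
    (y := _) ((TT n N).sub_mem ((TT n N).sub_mem (F_mem hN hε hx)
      ((TT n N).mul_mem hT.1 (tt_av _))) ((TT n N).mul_mem hT.2 (tt_av _))) ?_
  · rintro (⟨k, hk⟩ | b | ⟨i, hi⟩) h
    · rw [← av_off k hk]
      obtain ⟨h1, h2⟩ := h k hk rfl
      exact rg_av k h1 h2
    · cases b
      · exact rg_am
      · exact rg_ap
    · have := rg_uv (n := n) (N := N) i hi.1 hi.2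
      rwa [uvSD, dif_pos hi] at this
  · intro c; rw [algC]; exact rg_rat c
  · intro i hi
    push Not at hi
    obtain ⟨k, hk, rfl, h⟩ := hi
    have hk2 : k < n - N ∨ n + N < k := by
      by_contra hc
      push Not at hc
      exact absurd (h hc.1) (by omega)
    change phi n N k hk _ = _
    have e := phi_F hN hε hx k hk hk2
    rw [map_sub, map_sub, map_mul, map_mul, phi_rg k hk hk2 hR.1, phi_rg k hk hk2 hR.2]
    linear_combination e

end Fin
end SingConf

open SingConf MvPolynomial

/-- `Γ_n(t) = (Γ_{n+1}^{(0)} - Γ_{n-1}^{(0)})/(4t) + F + O(t)`, where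
`F = Γ_n^{(0)}` is a polynomial in `a_{n-N-1}, …, a_{n+N+1}, a₊, a₋` over `ℚ(u_1, …, u_N)`,
of degree exactly one in `a_{n-N-1}` and in `a_{n+N+1}`, with nonzero coefficients: writing
`α = a_{n-N-1}`, `β = a_{n+N+1}`, we have `F = A + Bα + Cβ + Dαβ` with `A, B, C, D`
polynomials in the remaining parameters `a_{n-N}, …, a_{n+N}, a₊, a₋` over `ℚ(u)`, and
`B, D` not both zero and `C, D` not both zero. -/
theorem statement10 (n : ℤ) (N : ℕ) (hN : 1 ≤ N)
    (ε : KSD n N) (hε : ε = 1 ∨ ε = -1)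
    (x : ℤ → LaurentSeries (KSD n N)) (hx : IsTheSDSol n N ε x)
    (G : ℤ → LaurentSeries (KSD n N)) (hG : ∀ k, G k = GamSD N (utSD n N) x k) :
    BigO (G n) (-1) ∧
    (G n).coeff (-1) = ((G (n + 1)).coeff 0 - (G (n - 1)).coeff 0) / 4 ∧
    ∃ A B C D : KSD n N,
      (∀ c ∈ ({A, B, C, D} : Set (KSD n N)),
        c ∈ Subring.closure
          ((Subfield.closure {c : KSD n N | ∃ i : ℕ, 1 ≤ i ∧ i ≤ N ∧ c = uvSD n N i} :
              Subfield (KSD n N)) ∪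
            {c : KSD n N | ∃ i : ℤ, n - N ≤ i ∧ i ≤ n + N ∧ c = avSD n N i} ∪
            {apSD n N, amSD n N})) ∧
      (G n).coeff 0 = A + B * avSD n N (n - N - 1) + C * avSD n N (n + N + 1) +
        D * (avSD n N (n - N - 1) * avSD n N (n + N + 1)) ∧
      (B ≠ 0 ∨ D ≠ 0) ∧ (C ≠ 0 ∨ D ≠ 0) := by
  obtain rfl : G = GamSD N (utSD n N) x := funext hG
  obtain ⟨-, -, h3⟩ := gam_regs (sol_dat hε hx) (sol_ne hε hx) hN ut_th ut_bigO
  have hR := co_mem (RgS n N) hN hε hx rg_av (rg_uv N hN le_rfl) rg_rat rg_ap rg_am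
  have hA := A_mem hN hε hx
  have hne := co_ne hN hε hx
  refine ⟨h3.1, h3.2, (GamSD N (utSD n N) x n).coeff 0 - coB n N ε x * avSD n N (n - N - 1) -
      coC n N ε x * avSD n N (n + N + 1),
    coB n N ε x, coC n N ε x, 0, ?_, ?_, Or.inl hne.1, Or.inl hne.2⟩
  · rintro c (rfl | rfl | rfl | rfl)
    · exact hA
    · exact hR.1
    · exact hR.2
    · exact (RgS n N).zero_mem
  · ring
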